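/- Bias of debiased subsampled OLS (Theorem 4.4, bias part): There exist absolute constants C > 0 and C' > 0 such that the following holds. Let n ≥ p ≥ 1 with n ≥ 3, let X ∈ ℝ^{n×p} have Xᵀ X invertible and satisfy the row-norm condition with exponent α > 0, let y ∈ ℝⁿ, let π be a sampling distribution with π i > 0 and ℓ_i(X) < m · π i for all i, let 0 < δ ≤ n^{−(3+α)}, and assume m ≥ C · θ_max(X) · p · log(p/δ). Then there exists an event ζ ⊆ Ω with P(ζ) ≥ 1 − δ such that (Š(ω) X)ᵀ Š(ω) X is invertible for every ω ∈ ζ and Bias_ζ(β̌) ≤ ε² · ‖r‖², where ε = C' · (log n / log log n) · √(θ_max(X)³ · p³ / m³). -/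

import Mathlib

/-!
Put `w_i = 1/(m π_i)` and `κ = θ_max(X) p / m`, so that `w_i ℓ_i(X) ≤ κ`. Replacing `X` by
`U = X T` with `Uᵀ U = 1` (`exists_orthonormalizer`), one has `ℓ_i = |u_i|²` for the rows `u_i` of
`U`, and the excess loss of an estimator is the squared length of its displacement from `β_OLS` in
the new coordinates (`loss_excess`). The displacement of the debiased estimator is
`A⁻¹ ∑_s a_{ω s} r_{ω s} u_{ω s}`, where `A = ∑_s a_{ω s} u_{ω s} u_{ω s}ᵀ` and
`a_i = w_i / (1 - w_i ℓ_i)` (`betaCheck_eq`). The event `ζ` is `A ≥ 1/2`.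

Fix a test vector `v` and a draw `s`, and let `B` be `A` without the `s`-th summand. For
`u = u_{ω s}`, the Sherman–Morrison formula gives
`a A⁻¹ u = w B⁻¹ u / (1 + w (uᵀ B⁻¹ u - |u|²))`: the debiasing factor is exactly what centres the
denominator at `1` (`debias_step`). Three terms result (`draw_bound`).

* The main term `r_i w_i vᵀ B⁻¹ u_i`, with `B` independent of the draw, averages to a multiple of
  `vᵀ B⁻¹ ∑_i r_i u_i`, which vanishes by the normal equations.
* Replacing the indicator of `ζ` by an indicator that does not depend on the `s`-th draw costs the
  probability that the unbiased leave-one-out Gram matrix is not bounded below by `1/2`. This is a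
  matrix Chernoff bound (`chernoff_lower`), proved by following the expected trace of a high power
  of `N - A` as draws are added one at a time; the bound is `p exp(-1/(80 κ))`.
* The fluctuation `w (uᵀ B⁻¹ u - |u|²)` is controlled by `|(B - 1) u|`, whose mean square is at
  most `8 κ |u|²` (`gram_mse`). Together with the factor `w |u|² ≤ κ` and Cauchy–Schwarz, this
  term is `O(κ^{3/2} ‖r‖ ‖v‖)`.

The lower bound on `m` says `160 κ log (p/δ) ≤ 1`, so the Chernoff tail is both at most `δ` and
`O(κ^{3/2})` (`tail_bounds`). Hence the bias is `O(κ³ ‖r‖²)`, and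
`κ^{3/2} = √(θ_max(X)³ p³ / m³)`, while `log n / log log n ≥ 1`.
-/

open Matrix Finset

noncomputable section

/-- Probability of the i.i.d. sample `ω` of `m` draws from the sampling
distribution `π` (pmf of the product measure on `Ω = Fin m → Fin n`). -/
def samplingP {n : ℕ} (π : Fin n → ℝ) {m : ℕ} (ω : Fin m → Fin n) : ℝ :=
  ∏ s, π (ω s)

/-- The sampling matrix `S(ω) ∈ ℝ^{m×n}` with `S(ω)_{s,j} = 1/√(m π_{ω s})` if
`j = ω s` and `0` otherwise. -/
def samplingS {n : ℕ} (π : Fin n → ℝ) {m : ℕ} (ω : Fin m → Fin n) :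
    Matrix (Fin m) (Fin n) ℝ :=
  Matrix.of fun s j => if j = ω s then 1 / Real.sqrt (m * π (ω s)) else 0

/-- The `i`-th leverage score `ℓ_i(X) = x_iᵀ (Xᵀ X)⁻¹ x_i`. -/
def lev {n p : ℕ} (X : Matrix (Fin n) (Fin p) ℝ) (i : Fin n) : ℝ :=
  X i ⬝ᵥ ((Xᵀ * X)⁻¹ *ᵥ X i)

/-- Maximum importance sampling approximation factor
`θ_max(X) = max_i ℓ_i(X)/(p π_i)`. -/
def thetaMax {n p : ℕ} (X : Matrix (Fin n) (Fin p) ℝ) (π : Fin n → ℝ) : ℝ :=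
  ⨆ i, lev X i / (p * π i)

/-- Probability of an event `ζ` relative to the pmf `P`. -/
def eventProb {Ω : Type*} (P : Ω → ℝ) (ζ : Finset Ω) : ℝ :=
  ∑ ω ∈ ζ, P ω

/-- Conditional expectation `E_ζ[f] = P(ζ)⁻¹ ∑_{ω ∈ ζ} P(ω) f(ω)`. -/
def condExp {Ω V : Type*} [AddCommMonoid V] [Module ℝ V]
    (P : Ω → ℝ) (ζ : Finset Ω) (f : Ω → V) : V :=
  (eventProb P ζ)⁻¹ • ∑ ω ∈ ζ, P ω • f ω

/-- Frobenius norm `‖A‖_F = √(trace (Aᵀ A))`. -/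
def frobNorm {k l : ℕ} (A : Matrix (Fin k) (Fin l) ℝ) : ℝ :=
  Real.sqrt ((Aᵀ * A).trace)

/-- Loewner order: `A ⪯ B` iff `B − A` is positive semidefinite. -/
def loewnerLE {k : ℕ} (A B : Matrix (Fin k) (Fin k) ℝ) : Prop :=
  (B - A).PosSemidef

/-- Debiased sampling matrix
`Š(ω) = diag(1/√(1 − ℓ_{ω s}(X)/(m π_{ω s})))_{s} · S(ω)`. -/
def samplingSdeb {n p : ℕ} (X : Matrix (Fin n) (Fin p) ℝ) (π : Fin n → ℝ) {m : ℕ}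
    (ω : Fin m → Fin n) : Matrix (Fin m) (Fin n) ℝ :=
  Matrix.diagonal (fun s => 1 / Real.sqrt (1 - lev X (ω s) / (m * π (ω s)))) *
    samplingS π ω

/-- Least-squares loss `L(β) = ‖y − X β‖²`. -/
def lossL {n p : ℕ} (X : Matrix (Fin n) (Fin p) ℝ) (y : Fin n → ℝ)
    (β : Fin p → ℝ) : ℝ :=
  (y - X *ᵥ β) ⬝ᵥ (y - X *ᵥ β)

/-- OLS solution `β_OLS = (Xᵀ X)⁻¹ Xᵀ y`. -/
def olsSol {n p : ℕ} (X : Matrix (Fin n) (Fin p) ℝ) (y : Fin n → ℝ) : Fin p → ℝ :=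
  (Xᵀ * X)⁻¹ *ᵥ (Xᵀ *ᵥ y)

/-- OLS residual `r = y − X β_OLS`. -/
def olsResid {n p : ℕ} (X : Matrix (Fin n) (Fin p) ℝ) (y : Fin n → ℝ) : Fin n → ℝ :=
  y - X *ᵥ olsSol X y

/-- Subsampled OLS estimator `β̃(ω) = ((S(ω) X)ᵀ S(ω) X)⁻¹ (S(ω) X)ᵀ S(ω) y`. -/
def betaTilde {n p : ℕ} (X : Matrix (Fin n) (Fin p) ℝ) (y : Fin n → ℝ)
    (π : Fin n → ℝ) {m : ℕ} (ω : Fin m → Fin n) : Fin p → ℝ :=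
  ((samplingS π ω * X)ᵀ * (samplingS π ω * X))⁻¹ *ᵥ
    ((samplingS π ω * X)ᵀ *ᵥ (samplingS π ω *ᵥ y))

/-- `Δ(X) = rᵀ diag(ℓ_i(X)/(m π_i)) r`. -/
def deltaOLS {n p : ℕ} (X : Matrix (Fin n) (Fin p) ℝ) (y : Fin n → ℝ)
    (π : Fin n → ℝ) (m : ℕ) : ℝ :=
  olsResid X y ⬝ᵥ
    (Matrix.diagonal (fun i => lev X i / (m * π i)) *ᵥ olsResid X y)

/-- Debiased subsampled OLS estimator
`β̌(ω) = ((Š(ω) X)ᵀ Š(ω) X)⁻¹ (Š(ω) X)ᵀ Š(ω) y`. -/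
def betaCheck {n p : ℕ} (X : Matrix (Fin n) (Fin p) ℝ) (y : Fin n → ℝ)
    (π : Fin n → ℝ) {m : ℕ} (ω : Fin m → Fin n) : Fin p → ℝ :=
  ((samplingSdeb X π ω * X)ᵀ * (samplingSdeb X π ω * X))⁻¹ *ᵥ
    ((samplingSdeb X π ω * X)ᵀ *ᵥ (samplingSdeb X π ω *ᵥ y))

/-! ### Positive semidefinite matrices: spectral moments and rank-one downdates -/

section LinAlg

variable {p : ℕ}

lemma dot_sq_le (a b : Fin p → ℝ) : (a ⬝ᵥ b) ^ 2 ≤ (a ⬝ᵥ a) * (b ⬝ᵥ b) := by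
  have h := Finset.sum_mul_sq_le_sq_mul_sq Finset.univ a b
  simpa [dotProduct, sq] using h

lemma dot_self_nonneg (a : Fin p → ℝ) : 0 ≤ a ⬝ᵥ a :=
  Finset.sum_nonneg fun i _ => mul_self_nonneg (a i)

lemma symm_dot {B : Matrix (Fin p) (Fin p) ℝ} (hB : Bᵀ = B) (u v : Fin p → ℝ) :
    u ⬝ᵥ (B *ᵥ v) = (B *ᵥ u) ⬝ᵥ v := by
  rw [dotProduct_mulVec, ← mulVec_transpose, hB]

lemma psd_symm {B : Matrix (Fin p) (Fin p) ℝ} (hB : B.PosSemidef) : Bᵀ = B := by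
  have := hB.1
  rwa [IsHermitian, conjTranspose_eq_transpose_of_trivial] at this

lemma psd_dot {B : Matrix (Fin p) (Fin p) ℝ} (hB : B.PosSemidef) (u : Fin p → ℝ) : 0 ≤ u ⬝ᵥ (B *ᵥ u) := by
  simpa using hB.dotProduct_mulVec_nonneg u

lemma psd_of {B : Matrix (Fin p) (Fin p) ℝ} (hB : Bᵀ = B) (h : ∀ u : Fin p → ℝ, 0 ≤ u ⬝ᵥ (B *ᵥ u)) :
    B.PosSemidef := by
  refine PosSemidef.of_dotProduct_mulVec_nonneg ?_ (by simpa using h)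
  rwa [IsHermitian, conjTranspose_eq_transpose_of_trivial]

/-- The spectral measure of `u` relative to a positive semidefinite matrix. -/
lemma psd_spectral {B : Matrix (Fin p) (Fin p) ℝ} (hB : B.PosSemidef) (u : Fin p → ℝ) :
    ∃ q l : Fin p → ℝ, (∀ x, 0 ≤ q x) ∧ (∀ x, 0 ≤ l x) ∧
      ∀ k : ℕ, u ⬝ᵥ (B ^ k *ᵥ u) = ∑ x, q x * l x ^ k := by
  have hs := hB.1.spectral_theorem
  set V : Matrix (Fin p) (Fin p) ℝ := (hB.1.eigenvectorUnitary : Matrix (Fin p) (Fin p) ℝ) with hV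
  have hVV : Vᵀ * V = 1 := by
    have := Unitary.coe_star_mul_self hB.1.eigenvectorUnitary
    simpa [hV, star_eq_conjTranspose, conjTranspose_eq_transpose_of_trivial] using this
  have hVV' : V * Vᵀ = 1 := mul_eq_one_comm.mp hVV
  set D : Matrix (Fin p) (Fin p) ℝ := diagonal hB.1.eigenvalues with hD
  have hs' : B = V * D * Vᵀ := by
    rw [Unitary.conjStarAlgAut_apply] at hs
    simpa [hV, hD, star_eq_conjTranspose, conjTranspose_eq_transpose_of_trivial,
      Function.comp_def] using hs
  have hpow : ∀ k : ℕ, B ^ k = V * D ^ k * Vᵀ := by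
    intro k
    induction k with
    | zero => simp [hVV']
    | succ k ih =>
      rw [pow_succ, ih, pow_succ]
      calc V * D ^ k * Vᵀ * B = V * D ^ k * Vᵀ * (V * D * Vᵀ) := congrArg _ hs'
        _ = V * D ^ k * (Vᵀ * V) * D * Vᵀ := by
            simp only [Matrix.mul_assoc]
        _ = _ := by rw [hVV]; simp only [Matrix.mul_assoc, Matrix.one_mul]
  refine ⟨fun x => (Vᵀ *ᵥ u) x ^ 2, hB.1.eigenvalues, fun x => sq_nonneg _,
    hB.eigenvalues_nonneg, fun k => ?_⟩
  rw [hpow, ← mulVec_mulVec, ← mulVec_mulVec, dotProduct_mulVec, ← mulVec_transpose, hD,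
    diagonal_pow]
  simp only [dotProduct, mulVec_diagonal, Pi.pow_apply]
  exact Finset.sum_congr rfl fun x _ => by ring

/-- Chebyshev's association inequality for the spectral moments of `B`. -/
lemma psd_cheb {B : Matrix (Fin p) (Fin p) ℝ} (hB : B.PosSemidef) (u : Fin p → ℝ) (i j : ℕ) :
    (u ⬝ᵥ (B ^ i *ᵥ u)) * (u ⬝ᵥ (B ^ j *ᵥ u)) ≤ (u ⬝ᵥ u) * (u ⬝ᵥ (B ^ (i + j) *ᵥ u)) := by
  obtain ⟨q, l, hq, hl, h⟩ := psd_spectral hB u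
  have h0 := h 0
  simp only [pow_zero, one_mulVec, mul_one] at h0
  rw [h, h, h, h0]
  have key : 0 ≤ ∑ x, ∑ y, q x * q y * ((l x ^ i - l y ^ i) * (l x ^ j - l y ^ j)) := by
    refine Finset.sum_nonneg fun x _ => Finset.sum_nonneg fun y _ => ?_
    refine mul_nonneg (mul_nonneg (hq x) (hq y)) ?_
    rcases le_total (l x) (l y) with hxy | hxy
    · exact mul_nonneg_of_nonpos_of_nonpos
        (sub_nonpos.2 (pow_le_pow_left₀ (hl x) hxy i)) (sub_nonpos.2 (pow_le_pow_left₀ (hl x) hxy j))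
    · exact mul_nonneg
        (sub_nonneg.2 (pow_le_pow_left₀ (hl y) hxy i)) (sub_nonneg.2 (pow_le_pow_left₀ (hl y) hxy j))
  have e : ∑ x, ∑ y, q x * q y * ((l x ^ i - l y ^ i) * (l x ^ j - l y ^ j))
      = 2 * ((∑ x, q x) * (∑ x, q x * l x ^ (i + j))
        - (∑ x, q x * l x ^ i) * (∑ x, q x * l x ^ j)) := by
    have e1 := Finset.sum_mul_sum Finset.univ Finset.univ q (fun x => q x * l x ^ (i + j))
    have e2 := Finset.sum_mul_sum Finset.univ Finset.univ (fun x => q x * l x ^ (i + j)) q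
    have e3 := Finset.sum_mul_sum Finset.univ Finset.univ
      (fun x => q x * l x ^ i) (fun x => q x * l x ^ j)
    have e4 := Finset.sum_mul_sum Finset.univ Finset.univ
      (fun x => q x * l x ^ j) (fun x => q x * l x ^ i)
    have : ∑ x, ∑ y, q x * q y * ((l x ^ i - l y ^ i) * (l x ^ j - l y ^ j))
      = (∑ x, q x * l x ^ (i + j)) * (∑ x, q x) + (∑ x, q x) * (∑ x, q x * l x ^ (i + j))
        - (∑ x, q x * l x ^ i) * (∑ x, q x * l x ^ j)
        - (∑ x, q x * l x ^ j) * (∑ x, q x * l x ^ i) := by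
      rw [e1, e2, e3, e4]
      simp only [← Finset.sum_add_distrib, ← Finset.sum_sub_distrib]
      refine Finset.sum_congr rfl fun x _ => Finset.sum_congr rfl fun y _ => ?_
      ring
    rw [this]; ring
  linarith

lemma psd_pow_dot {B : Matrix (Fin p) (Fin p) ℝ} (hB : B.PosSemidef) (u : Fin p → ℝ) (k : ℕ) :
    0 ≤ u ⬝ᵥ (B ^ k *ᵥ u) := psd_dot (hB.pow k) u

/-- Jensen's inequality for the spectral measure of a unit vector. -/
lemma psd_jensen {B : Matrix (Fin p) (Fin p) ℝ} (hB : B.PosSemidef) {u : Fin p → ℝ} (hu : u ⬝ᵥ u = 1) (k : ℕ) :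
    (u ⬝ᵥ (B *ᵥ u)) ^ k ≤ u ⬝ᵥ (B ^ k *ᵥ u) := by
  induction k with
  | zero => simp [hu]
  | succ k ih =>
    have h1 := psd_cheb hB u k 1
    rw [hu, one_mul, pow_one] at h1
    rw [pow_succ]
    exact (mul_le_mul_of_nonneg_right ih (psd_dot hB u)).trans h1

/-- The diagonal entry of `B` at a unit vector is at most the trace. -/
lemma psd_dot_le_trace {B : Matrix (Fin p) (Fin p) ℝ} (hB : B.PosSemidef) {u : Fin p → ℝ} (hu : u ⬝ᵥ u = 1) :
    u ⬝ᵥ (B *ᵥ u) ≤ B.trace := by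
  -- `tr B - uᵀ B u` is the trace of `Pᵀ B P` for the projection `P = 1 - u uᵀ`
  have h := (hB.conjTranspose_mul_mul_same (1 - vecMulVec u u)).trace_nonneg
  have hP : (1 - vecMulVec u u)ᴴ = 1 - vecMulVec u u := by
    rw [conjTranspose_eq_transpose_of_trivial, transpose_sub, transpose_one, transpose_vecMulVec]
  have hPP : (1 - vecMulVec u u) * (1 - vecMulVec u u) = 1 - vecMulVec u u := by
    have : vecMulVec u u * vecMulVec u u = vecMulVec u u := by
      rw [vecMulVec_mul_vecMulVec, hu, one_smul]
    rw [Matrix.sub_mul, Matrix.mul_sub, Matrix.mul_sub, this]; simp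
  rw [hP, Matrix.trace_mul_comm, ← Matrix.mul_assoc, hPP, Matrix.sub_mul, Matrix.one_mul,
    trace_sub, vecMulVec_mul, trace_vecMulVec,
    dotProduct_comm, ← dotProduct_mulVec] at h
  linarith

/-- Telescoping of `Bˡ - Xˡ` without commutativity. -/
lemma pow_sub_pow_noncomm {R : Type*} [Ring R] (B X : R) (l : ℕ) :
    B ^ l - X ^ l = ∑ i ∈ Finset.range l, X ^ i * (B - X) * B ^ (l - 1 - i) := by
  induction l with
  | zero => simp
  | succ l ih =>
    rw [Finset.sum_range_succ']
    have : ∀ i ∈ Finset.range l, X ^ (i + 1) * (B - X) * B ^ (l + 1 - 1 - (i + 1))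
        = X * (X ^ i * (B - X) * B ^ (l - 1 - i)) := by
      intro i _
      rw [show l + 1 - 1 - (i + 1) = l - 1 - i by omega, pow_succ']
      simp only [mul_assoc]
    rw [Finset.sum_congr rfl this, ← Finset.mul_sum, ← ih]
    simp only [pow_succ', pow_zero, one_mul, Nat.add_sub_cancel, Nat.sub_zero]
    noncomm_ring

/-- Bilinear form of `Bˡ - Xˡ` when `B - X = a u uᵀ`. -/
lemma dot_pow_sub {B X : Matrix (Fin p) (Fin p) ℝ} {a : ℝ} {u : Fin p → ℝ}
    (hR : B - X = a • vecMulVec u u) (hX : Xᵀ = X) (x z : Fin p → ℝ) (l : ℕ) :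
    x ⬝ᵥ (B ^ l *ᵥ z) - x ⬝ᵥ (X ^ l *ᵥ z) =
      ∑ i ∈ Finset.range l, a * ((X ^ i *ᵥ x) ⬝ᵥ u) * (u ⬝ᵥ (B ^ (l - 1 - i) *ᵥ z)) := by
  rw [← dotProduct_sub, ← sub_mulVec, pow_sub_pow_noncomm B X l, sum_mulVec, dotProduct_sum]
  refine Finset.sum_congr rfl fun i _ => ?_
  have hXi : (X ^ i)ᵀ = X ^ i := by rw [transpose_pow, hX]
  rw [hR, ← mulVec_mulVec, ← mulVec_mulVec, symm_dot hXi, smul_mulVec, vecMulVec_mulVec,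
    dotProduct_smul, op_smul_eq_smul, dotProduct_smul]
  simp only [smul_eq_mul]
  ring

/-- Removing a rank-one piece `a u uᵀ` from `B`: a second-order upper bound for the change of
the trace of a power.  It replaces the Golden–Thompson inequality in the matrix Chernoff bound. -/
lemma trace_pow_rank_one {B X : Matrix (Fin p) (Fin p) ℝ} {a : ℝ} (ha : 0 ≤ a) {u : Fin p → ℝ}
    (hR : B - X = a • vecMulVec u u) (hX : X.PosSemidef) (hB : B.PosSemidef) (K : ℕ) :
    (X ^ (K + 2)).trace ≤ (B ^ (K + 2)).trace
      - (K + 2) * (a * (u ⬝ᵥ (B ^ (K + 1) *ᵥ u))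
        - (K + 1) * (a * (u ⬝ᵥ u)) * (a * (u ⬝ᵥ (B ^ K *ᵥ u)))) := by
  have hXs := psd_symm hX
  have hBs := psd_symm hB
  have hXp : ∀ i : ℕ, (X ^ i)ᵀ = X ^ i := fun i => by rw [transpose_pow, hXs]
  have hBp : ∀ i : ℕ, (B ^ i)ᵀ = B ^ i := fun i => by rw [transpose_pow, hBs]
  have hd : ∀ l : ℕ, u ⬝ᵥ (B ^ l *ᵥ u) - u ⬝ᵥ (X ^ l *ᵥ u) =
      ∑ i ∈ Finset.range l, a * (u ⬝ᵥ (X ^ i *ᵥ u)) * (u ⬝ᵥ (B ^ (l - 1 - i) *ᵥ u)) := by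
    intro l
    rw [dot_pow_sub hR hXs]
    exact Finset.sum_congr rfl fun i _ => by rw [symm_dot (hXp i)]
  -- `X ≤ B` does not give `Xˡ ≤ Bˡ` for noncommuting matrices, but the forms at `u` do compare
  have hle : ∀ l : ℕ, u ⬝ᵥ (X ^ l *ᵥ u) ≤ u ⬝ᵥ (B ^ l *ᵥ u) := by
    intro l
    rw [← sub_nonneg, hd]
    exact Finset.sum_nonneg fun i _ =>
      mul_nonneg (mul_nonneg ha (psd_pow_dot hX u i)) (psd_pow_dot hB u _)
  have hlow : u ⬝ᵥ (B ^ (K + 1) *ᵥ u) - (K + 1) * (a * (u ⬝ᵥ u)) * (u ⬝ᵥ (B ^ K *ᵥ u))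
      ≤ u ⬝ᵥ (X ^ (K + 1) *ᵥ u) := by
    have hs : u ⬝ᵥ (B ^ (K + 1) *ᵥ u) - u ⬝ᵥ (X ^ (K + 1) *ᵥ u) ≤
        ∑ _i ∈ Finset.range (K + 1), a * ((u ⬝ᵥ u) * (u ⬝ᵥ (B ^ K *ᵥ u))) := by
      rw [hd]
      refine Finset.sum_le_sum fun i hi => ?_
      have hi' : i ≤ K := Nat.lt_succ_iff.mp (Finset.mem_range.mp hi)
      have h1 := psd_cheb hB u i (K + 1 - 1 - i)
      rw [show i + (K + 1 - 1 - i) = K by omega] at h1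
      rw [mul_assoc]
      refine mul_le_mul_of_nonneg_left ?_ ha
      exact (mul_le_mul_of_nonneg_right (hle i) (psd_pow_dot hB u _)).trans h1
    rw [Finset.sum_const, Finset.card_range, nsmul_eq_mul] at hs
    push_cast at hs
    linarith
  have hmix : ∀ i j : ℕ, u ⬝ᵥ (X ^ (i + j) *ᵥ u) ≤ (X ^ i *ᵥ u) ⬝ᵥ (B ^ j *ᵥ u) := by
    intro i j
    have h1 := dot_pow_sub hR hXs (X ^ i *ᵥ u) u j
    have h2 : (X ^ i *ᵥ u) ⬝ᵥ (X ^ j *ᵥ u) = u ⬝ᵥ (X ^ (i + j) *ᵥ u) := by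
      rw [← symm_dot (hXp i), mulVec_mulVec, pow_add]
    have h3 : 0 ≤ ∑ i' ∈ Finset.range j, a * ((X ^ i' *ᵥ (X ^ i *ᵥ u)) ⬝ᵥ u) *
        (u ⬝ᵥ (B ^ (j - 1 - i') *ᵥ u)) := by
      refine Finset.sum_nonneg fun i' _ => mul_nonneg (mul_nonneg ha ?_) (psd_pow_dot hB u _)
      rw [mulVec_mulVec, ← pow_add, dotProduct_comm]
      exact psd_pow_dot hX u _
    linarith
  have htr : (B ^ (K + 2)).trace - (X ^ (K + 2)).trace =
      ∑ i ∈ Finset.range (K + 2), a * ((X ^ i *ᵥ u) ⬝ᵥ (B ^ (K + 1 - i) *ᵥ u)) := by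
    rw [← trace_sub, pow_sub_pow_noncomm B X, trace_sum]
    refine Finset.sum_congr rfl fun i hi => ?_
    rw [hR, Matrix.mul_smul, Matrix.smul_mul, trace_smul, mul_vecMulVec, vecMulVec_mul,
      trace_vecMulVec, ← mulVec_transpose, hBp, smul_eq_mul,
      show K + 2 - 1 - i = K + 1 - i by omega]
  have hsum : ∑ _i ∈ Finset.range (K + 2), a * (u ⬝ᵥ (X ^ (K + 1) *ᵥ u)) ≤
      (B ^ (K + 2)).trace - (X ^ (K + 2)).trace := by
    rw [htr]
    refine Finset.sum_le_sum fun i hi => mul_le_mul_of_nonneg_left ?_ ha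
    have h1 := hmix i (K + 1 - i)
    rwa [show i + (K + 1 - i) = K + 1 by have := Finset.mem_range.mp hi; omega] at h1
  rw [Finset.sum_const, Finset.card_range, nsmul_eq_mul] at hsum
  push_cast at hsum
  have h5 := mul_le_mul_of_nonneg_left hlow ha
  have h6 := mul_le_mul_of_nonneg_left h5 (by positivity : (0:ℝ) ≤ (K:ℝ) + 2)
  nlinarith

end LinAlg

/-! ### Inverses, the Sherman–Morrison formula, and expectations over the sample -/

section Inverse

variable {p : ℕ}

open scoped MatrixOrder Matrix.Norms.L2Operator in
lemma trace_mul_nonneg_of_psd {A B : Matrix (Fin p) (Fin p) ℝ} (hA : A.PosSemidef)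
    (hB : B.PosSemidef) : 0 ≤ (A * B).trace := by
  obtain ⟨C, rfl⟩ := CStarAlgebra.nonneg_iff_eq_star_mul_self.mp hA.nonneg
  rw [Matrix.mul_assoc, trace_mul_comm]
  exact (hB.mul_mul_conjTranspose_same C).trace_nonneg

/-- A matrix bounded below by `1/4` is invertible. -/
lemma isUnit_det_of_quarter {A : Matrix (Fin p) (Fin p) ℝ}
    (hA : ∀ z, 1 / 4 * (z ⬝ᵥ z) ≤ z ⬝ᵥ (A *ᵥ z)) : IsUnit A.det := by
  rw [isUnit_iff_ne_zero]
  intro h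
  obtain ⟨v, hv, hAv⟩ := exists_mulVec_eq_zero_iff.mpr h
  have := hA v
  rw [hAv, dotProduct_zero] at this
  have h0 : v ⬝ᵥ v = 0 := le_antisymm (by linarith) (dot_self_nonneg v)
  exact hv (dotProduct_self_eq_zero.mp h0)

lemma inv_norm_le {A : Matrix (Fin p) (Fin p) ℝ}
    (hA : ∀ z, 1 / 4 * (z ⬝ᵥ z) ≤ z ⬝ᵥ (A *ᵥ z)) (v : Fin p → ℝ) :
    (A⁻¹ *ᵥ v) ⬝ᵥ (A⁻¹ *ᵥ v) ≤ 16 * (v ⬝ᵥ v) := by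
  have hu := isUnit_det_of_quarter hA
  have h1 := hA (A⁻¹ *ᵥ v)
  rw [mulVec_mulVec, mul_nonsing_inv _ hu, one_mulVec] at h1
  have h2 := dot_sq_le (A⁻¹ *ᵥ v) v
  set g := (A⁻¹ *ᵥ v) ⬝ᵥ (A⁻¹ *ᵥ v)
  have hg : 0 ≤ g := dot_self_nonneg _
  have hv := dot_self_nonneg v
  rcases hg.eq_or_lt with h | h
  · rw [← h]; positivity
  · have h3 : (1 / 4 * g) ^ 2 ≤ g * (v ⬝ᵥ v) :=
      (pow_le_pow_left₀ (by positivity) h1 2).trans h2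
    have h4 : g * g ≤ g * (16 * (v ⬝ᵥ v)) := by nlinarith
    exact le_of_mul_le_mul_left h4 h

lemma inv_form_nonneg {A : Matrix (Fin p) (Fin p) ℝ} (hs : Aᵀ = A)
    (hA : ∀ z, 1 / 4 * (z ⬝ᵥ z) ≤ z ⬝ᵥ (A *ᵥ z)) (v : Fin p → ℝ) :
    0 ≤ v ⬝ᵥ (A⁻¹ *ᵥ v) :=
  psd_dot (psd_of hs fun z => (by have := dot_self_nonneg z; positivity :
    (0:ℝ) ≤ 1 / 4 * (z ⬝ᵥ z)).trans (hA z)).inv v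

/-- Sherman–Morrison, in the form `(B + a u uᵀ)⁻¹ u · (1 + a uᵀ B⁻¹ u) = B⁻¹ u`. -/
lemma sherman_morrison {A B : Matrix (Fin p) (Fin p) ℝ} {a : ℝ} {u : Fin p → ℝ}
    (h : A = B + a • vecMulVec u u) (hA : IsUnit A.det) (hB : IsUnit B.det) :
    B⁻¹ *ᵥ u = (1 + a * (u ⬝ᵥ (B⁻¹ *ᵥ u))) • (A⁻¹ *ᵥ u) := by
  have h1 : A *ᵥ (B⁻¹ *ᵥ u) = (1 + a * (u ⬝ᵥ (B⁻¹ *ᵥ u))) • u := by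
    nth_rw 1 [h]
    rw [add_mulVec, mulVec_mulVec, mul_nonsing_inv _ hB, one_mulVec, smul_mulVec,
      vecMulVec_mulVec, op_smul_eq_smul, smul_smul, add_smul, one_smul]
  rw [← mulVec_smul, ← h1, mulVec_mulVec, nonsing_inv_mul _ hA, one_mulVec]

end Inverse

section Expectation

variable {n m : ℕ}

/-- Expectation of a real function of the sample `ω`, with i.i.d. coordinates drawn from `π`. -/
def expct (π : Fin n → ℝ) (f : (Fin m → Fin n) → ℝ) : ℝ := ∑ ω, samplingP π ω * f ω

lemma samplingP_nonneg {π : Fin n → ℝ} (hπ : ∀ i, 0 < π i) (ω : Fin m → Fin n) :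
    0 ≤ samplingP π ω := Finset.prod_nonneg fun _ _ => (hπ _).le

lemma samplingP_sum {π : Fin n → ℝ} (h1 : ∑ i, π i = 1) :
    ∑ ω : Fin m → Fin n, samplingP π ω = 1 := by
  have := Finset.prod_univ_sum (fun _ : Fin m => (Finset.univ : Finset (Fin n))) (fun _ i => π i)
  simp only [h1, Finset.prod_const_one, Fintype.piFinset_univ] at this
  exact this.symm

lemma expct_const {π : Fin n → ℝ} (h1 : ∑ i, π i = 1) (c : ℝ) :
    expct (m := m) π (fun _ => c) = c := by
  rw [expct, ← Finset.sum_mul, samplingP_sum h1, one_mul]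

lemma expct_mono {π : Fin n → ℝ} (hπ : ∀ i, 0 < π i) {f g : (Fin m → Fin n) → ℝ}
    (h : ∀ ω, f ω ≤ g ω) : expct π f ≤ expct π g :=
  Finset.sum_le_sum fun ω _ => mul_le_mul_of_nonneg_left (h ω) (samplingP_nonneg hπ ω)

lemma expct_mul_const (π : Fin n → ℝ) (f : (Fin m → Fin n) → ℝ) (c : ℝ) :
    expct π (fun ω => f ω * c) = expct π f * c := by
  simp only [expct, Finset.sum_mul, mul_assoc]

lemma expct_const_mul (π : Fin n → ℝ) (f : (Fin m → Fin n) → ℝ) (c : ℝ) :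
    expct π (fun ω => c * f ω) = c * expct π f := by
  simp only [mul_comm c, expct_mul_const]

lemma expct_add (π : Fin n → ℝ) (f g : (Fin m → Fin n) → ℝ) :
    expct π (fun ω => f ω + g ω) = expct π f + expct π g := by
  simp only [expct, mul_add, Finset.sum_add_distrib]

lemma expct_sub (π : Fin n → ℝ) (f g : (Fin m → Fin n) → ℝ) :
    expct π (fun ω => f ω - g ω) = expct π f - expct π g := by
  simp only [expct, mul_sub, Finset.sum_sub_distrib]

lemma expct_sum {κ : Type*} (π : Fin n → ℝ) (S : Finset κ) (f : κ → (Fin m → Fin n) → ℝ) :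
    expct π (fun ω => ∑ i ∈ S, f i ω) = ∑ i ∈ S, expct π (f i) := by
  simp only [expct, Finset.mul_sum]
  exact Finset.sum_comm

lemma abs_expct_le {π : Fin n → ℝ} (hπ : ∀ i, 0 < π i) (f : (Fin m → Fin n) → ℝ) :
    |expct π f| ≤ expct π fun ω => |f ω| := by
  refine (Finset.abs_sum_le_sum_abs _ _).trans (le_of_eq ?_)
  exact Finset.sum_congr rfl fun ω _ => by rw [abs_mul, abs_of_nonneg (samplingP_nonneg hπ ω)]

/-- The joint weight of a sample and a fresh draw is invariant under swapping the draw into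
coordinate `s`. -/
lemma samplingP_update (π : Fin n → ℝ) (ω : Fin m → Fin n) (s : Fin m) (i : Fin n) :
    samplingP π (Function.update ω s i) * π (ω s) = samplingP π ω * π i := by
  unfold samplingP
  rw [← Finset.mul_prod_erase _ _ (Finset.mem_univ s),
    ← Finset.mul_prod_erase Finset.univ (fun t => π (ω t)) (Finset.mem_univ s)]
  have : ∏ t ∈ Finset.univ.erase s, π (Function.update ω s i t) =
      ∏ t ∈ Finset.univ.erase s, π (ω t) :=
    Finset.prod_congr rfl fun t ht => by
      rw [Function.update_of_ne (Finset.ne_of_mem_erase ht)]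
  rw [this, Function.update_self]
  ring

/-- Redrawing one coordinate does not change an expectation: the swap
`(ω, i) ↦ (ω with ω s replaced by i, ω s)` is a measure-preserving involution. -/
lemma expct_resample {π : Fin n → ℝ} (h1 : ∑ i, π i = 1) (s : Fin m)
    (G : (Fin m → Fin n) → ℝ) :
    expct π G = expct π fun ω => ∑ i, π i * G (Function.update ω s i) := by
  have hL : expct π G = ∑ z : (Fin m → Fin n) × Fin n, samplingP π z.1 * π z.2 * G z.1 := by
    rw [Fintype.sum_prod_type]
    refine Finset.sum_congr rfl fun ω _ => ?_
    simp only
    rw [← Finset.sum_mul, ← Finset.mul_sum, h1, mul_one]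
  have hR : (expct π fun ω => ∑ i, π i * G (Function.update ω s i)) =
      ∑ z : (Fin m → Fin n) × Fin n,
        samplingP π z.1 * π z.2 * G (Function.update z.1 s z.2) := by
    rw [Fintype.sum_prod_type]
    refine Finset.sum_congr rfl fun ω _ => ?_
    rw [Finset.mul_sum]
    exact Finset.sum_congr rfl fun i _ => by ring
  rw [hL, hR]
  refine Finset.sum_nbij' (fun z => (Function.update z.1 s z.2, z.1 s))
    (fun z => (Function.update z.1 s z.2, z.1 s)) (by simp) (by simp) (by simp) (by simp) ?_
  intro z _
  simp only [Function.update_idem, Function.update_eq_self, samplingP_update]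

/-- If `F i` does not depend on the `s`-th draw, then `ω s` may be averaged out. -/
lemma expct_indep {π : Fin n → ℝ} (h1 : ∑ i, π i = 1) (s : Fin m)
    (F : Fin n → (Fin m → Fin n) → ℝ)
    (hF : ∀ i j ω, F i (Function.update ω s j) = F i ω) :
    expct π (fun ω => F (ω s) ω) = expct π fun ω => ∑ i, π i * F i ω := by
  rw [expct_resample h1 s]
  simp only [Function.update_self, hF]

end Expectation

/-! ### Lower tail of the matrix Chernoff bound -/

section Chernoff

variable {n p m : ℕ}

/-- The partial sketched Gram matrix `∑_{s ∈ S} c_{ω s} u_{ω s} u_{ω s}ᵀ`, where `u_i` is the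
`i`-th row of `U`. -/
def gramOn (c : Fin n → ℝ) (U : Matrix (Fin n) (Fin p) ℝ) (S : Finset (Fin m))
    (ω : Fin m → Fin n) : Matrix (Fin p) (Fin p) ℝ :=
  ∑ s ∈ S, c (ω s) • vecMulVec (U (ω s)) (U (ω s))

lemma gramOn_symm (c : Fin n → ℝ) (U : Matrix (Fin n) (Fin p) ℝ) (S : Finset (Fin m))
    (ω : Fin m → Fin n) : (gramOn c U S ω)ᵀ = gramOn c U S ω := by
  simp only [gramOn, transpose_sum, transpose_smul, transpose_vecMulVec]

lemma gramOn_mulVec (c : Fin n → ℝ) (U : Matrix (Fin n) (Fin p) ℝ) (S : Finset (Fin m))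
    (ω : Fin m → Fin n) (z : Fin p → ℝ) :
    gramOn c U S ω *ᵥ z = ∑ s ∈ S, (c (ω s) * (U (ω s) ⬝ᵥ z)) • U (ω s) := by
  rw [gramOn, sum_mulVec]
  refine Finset.sum_congr rfl fun s _ => ?_
  rw [smul_mulVec, vecMulVec_mulVec, op_smul_eq_smul, smul_smul]

lemma gramOn_dot (c : Fin n → ℝ) (U : Matrix (Fin n) (Fin p) ℝ) (S : Finset (Fin m))
    (ω : Fin m → Fin n) (z : Fin p → ℝ) :
    z ⬝ᵥ (gramOn c U S ω *ᵥ z) = ∑ s ∈ S, c (ω s) * (U (ω s) ⬝ᵥ z) ^ 2 := by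
  rw [gramOn_mulVec, dotProduct_sum]
  refine Finset.sum_congr rfl fun s _ => ?_
  rw [dotProduct_smul, smul_eq_mul, dotProduct_comm z]
  ring

lemma gramOn_update (c : Fin n → ℝ) (U : Matrix (Fin n) (Fin p) ℝ) {S : Finset (Fin m)}
    {s : Fin m} (hs : s ∉ S) (ω : Fin m → Fin n) (j : Fin n) :
    gramOn c U S (Function.update ω s j) = gramOn c U S ω := by
  refine Finset.sum_congr rfl fun t ht => ?_
  rw [Function.update_of_ne (by rintro rfl; exact hs ht)]

lemma gramOn_insert (c : Fin n → ℝ) (U : Matrix (Fin n) (Fin p) ℝ) {S : Finset (Fin m)}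
    {s : Fin m} (hs : s ∉ S) (ω : Fin m → Fin n) :
    gramOn c U (insert s S) ω =
      c (ω s) • vecMulVec (U (ω s)) (U (ω s)) + gramOn c U S ω :=
  Finset.sum_insert hs

lemma gramOn_dot_nonneg {c : Fin n → ℝ} (hc : ∀ i, 0 ≤ c i) (U : Matrix (Fin n) (Fin p) ℝ)
    (S : Finset (Fin m)) (ω : Fin m → Fin n) (z : Fin p → ℝ) :
    0 ≤ z ⬝ᵥ (gramOn c U S ω *ᵥ z) := by
  rw [gramOn_dot]
  exact Finset.sum_nonneg fun s _ => mul_nonneg (hc _) (sq_nonneg _)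

lemma gramOn_dot_le {c : Fin n → ℝ} (hc : ∀ i, 0 ≤ c i) (U : Matrix (Fin n) (Fin p) ℝ) {κ : ℝ}
    (hκ : ∀ i, c i * (U i ⬝ᵥ U i) ≤ κ) (hκ0 : 0 ≤ κ)
    (S : Finset (Fin m)) (ω : Fin m → Fin n) (z : Fin p → ℝ) :
    z ⬝ᵥ (gramOn c U S ω *ᵥ z) ≤ m * κ * (z ⬝ᵥ z) := by
  rw [gramOn_dot]
  have hz := dot_self_nonneg z
  calc ∑ s ∈ S, c (ω s) * (U (ω s) ⬝ᵥ z) ^ 2 ≤ ∑ _s ∈ S, κ * (z ⬝ᵥ z) := by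
        refine Finset.sum_le_sum fun s _ => ?_
        calc c (ω s) * (U (ω s) ⬝ᵥ z) ^ 2
            ≤ c (ω s) * ((U (ω s) ⬝ᵥ U (ω s)) * (z ⬝ᵥ z)) :=
              mul_le_mul_of_nonneg_left (dot_sq_le _ _) (hc _)
          _ = (c (ω s) * (U (ω s) ⬝ᵥ U (ω s))) * (z ⬝ᵥ z) := by ring
          _ ≤ _ := mul_le_mul_of_nonneg_right (hκ _) hz
    _ = S.card * (κ * (z ⬝ᵥ z)) := by rw [Finset.sum_const, nsmul_eq_mul]
    _ ≤ m * (κ * (z ⬝ᵥ z)) := by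
        refine mul_le_mul_of_nonneg_right ?_ (by positivity)
        have := Finset.card_le_univ S
        rw [Fintype.card_fin] at this
        exact_mod_cast this
    _ = _ := by ring

/-- For `U` with orthonormal columns, `∑ u_i u_iᵀ = 1`, tested against `M`. -/
lemma sum_row_form {U : Matrix (Fin n) (Fin p) ℝ} (hU : Uᵀ * U = 1)
    (M : Matrix (Fin p) (Fin p) ℝ) : ∑ i, U i ⬝ᵥ (M *ᵥ U i) = M.trace := by
  have h : (U * M * Uᵀ).trace = M.trace := by
    rw [trace_mul_comm, ← Matrix.mul_assoc, hU, Matrix.one_mul]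
  rw [← h, trace]
  refine Finset.sum_congr rfl fun i _ => ?_
  rw [diag_apply, Matrix.mul_assoc, Matrix.mul_apply]
  simp only [dotProduct, mulVec, Matrix.mul_apply, transpose_apply]

/-- Adding one draw to the unbiased Gram matrix `A` contracts the expected trace of
`(N - A)^(K+2)` by the factor `1 - 7/(128 κ m)`. With `N = 16 κ (K + 2)` the second-order term of
`trace_pow_rank_one` is at most `1/8` of the first-order one. -/
lemma trace_step {U : Matrix (Fin n) (Fin p) ℝ} (hU : Uᵀ * U = 1) {π : Fin n → ℝ}
    (hπ : ∀ i, 0 < π i) (h1 : ∑ i, π i = 1) (hm : 0 < m) {κ N : ℝ} (hκ0 : 0 < κ)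
    (hκ : ∀ i, 1 / (m * π i) * (U i ⬝ᵥ U i) ≤ κ) (K : ℕ)
    (hN : N = 16 * κ * (K + 2)) (hNm : 2 * (m * κ) ≤ N)
    {S : Finset (Fin m)} {s : Fin m} (hs : s ∉ S) :
    expct π (fun ω => ((N • 1 - gramOn (fun i => 1 / (m * π i)) U (insert s S) ω) ^
        (K + 2)).trace) ≤
      expct π (fun ω => ((N • 1 - gramOn (fun i => 1 / (m * π i)) U S ω) ^ (K + 2)).trace)
        * (1 - 7 / (128 * κ * m)) := by
  set c : Fin n → ℝ := fun i => 1 / (m * π i) with hc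
  have hm' : (0:ℝ) < m := by exact_mod_cast hm
  have hc0 : ∀ i, 0 ≤ c i := fun i => by have := hπ i; simp only [hc]; positivity
  have hcπ : ∀ i, π i * c i = 1 / m := fun i => by have := (hπ i).ne'; simp only [hc]; field_simp
  have hN0 : 0 < N := by rw [hN]; positivity
  -- lower bound on `N - A_T` for every `T`
  have hlow : ∀ (T : Finset (Fin m)) (ω : Fin m → Fin n),
      ((N • 1 - gramOn c U T ω) - (N / 2) • 1).PosSemidef := by
    intro T ω
    refine psd_of ?_ fun z => ?_
    · simp only [transpose_sub, transpose_smul, transpose_one, gramOn_symm]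
    · have h2 := gramOn_dot_le hc0 U hκ hκ0.le T ω z
      have hz := dot_self_nonneg z
      simp only [sub_mulVec, smul_mulVec, one_mulVec, dotProduct_sub, dotProduct_smul, smul_eq_mul]
      nlinarith
  have hpsd : ∀ (T : Finset (Fin m)) (ω : Fin m → Fin n),
      (N • 1 - gramOn c U T ω).PosSemidef := by
    intro T ω
    have := (hlow T ω).add ((PosSemidef.one).smul (by positivity : 0 ≤ N / 2))
    rwa [sub_add_cancel] at this
  set B : (Fin m → Fin n) → Matrix (Fin p) (Fin p) ℝ := fun ω => N • 1 - gramOn c U S ω with hB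
  have hBlow : ∀ ω, N / 2 * (B ω ^ K).trace ≤ (B ω ^ (K + 1)).trace := by
    intro ω
    have := trace_mul_nonneg_of_psd ((hpsd S ω).pow K) (hlow S ω)
    rw [Matrix.mul_sub, Matrix.mul_smul, Matrix.mul_one, ← pow_succ, trace_sub, trace_smul,
      smul_eq_mul] at this
    linarith
  have hBup : ∀ ω, (B ω ^ (K + 2)).trace ≤ N * (B ω ^ (K + 1)).trace := by
    intro ω
    have hA : (gramOn c U S ω).PosSemidef := psd_of (gramOn_symm _ _ _ _)
      (gramOn_dot_nonneg hc0 U S ω)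
    have h := trace_mul_nonneg_of_psd ((hpsd S ω).pow (K + 1)) hA
    change 0 ≤ (B ω ^ (K + 1) * gramOn c U S ω).trace at h
    have e : gramOn c U S ω = N • 1 - B ω := (sub_sub_cancel _ _).symm
    have e2 : B ω ^ (K + 1) * gramOn c U S ω = N • B ω ^ (K + 1) - B ω ^ (K + 2) := by
      calc _ = B ω ^ (K + 1) * (N • 1 - B ω) := congrArg _ e
        _ = _ := by rw [Matrix.mul_sub, Matrix.mul_smul, Matrix.mul_one, ← pow_succ]
    rw [e2, trace_sub, trace_smul, smul_eq_mul] at h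
    linarith
  have hind := expct_indep h1 s
    (fun i ω => ((B ω - c i • vecMulVec (U i) (U i)) ^ (K + 2)).trace)
    (fun i j ω => by simp only [hB, gramOn_update c U hs])
  have hL : (fun ω => ((N • 1 - gramOn c U (insert s S) ω) ^ (K + 2)).trace) =
      fun ω => ((B ω - c (ω s) • vecMulVec (U (ω s)) (U (ω s))) ^ (K + 2)).trace := by
    funext ω
    rw [gramOn_insert c U hs, hB]
    simp only
    congr 2
    abel
  rw [hL, hind, ← expct_mul_const]
  refine expct_mono hπ fun ω => ?_
  have hstep : ∀ i, ((B ω - c i • vecMulVec (U i) (U i)) ^ (K + 2)).trace ≤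
      (B ω ^ (K + 2)).trace - (K + 2) * (c i * (U i ⬝ᵥ (B ω ^ (K + 1) *ᵥ U i))
        - (K + 1) * κ * (c i * (U i ⬝ᵥ (B ω ^ K *ᵥ U i)))) := by
    intro i
    have hX : (B ω - c i • vecMulVec (U i) (U i)).PosSemidef := by
      have h2 := hpsd (insert s S) (Function.update ω s i)
      rw [gramOn_insert c U hs, gramOn_update c U hs, Function.update_self] at h2
      rw [hB]
      simp only
      convert h2 using 1
      abel
    have h3 := trace_pow_rank_one (B := B ω) (a := c i) (u := U i) (hc0 i) (sub_sub_cancel _ _) hX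
      (hpsd S ω) K
    refine h3.trans ?_
    have h4 : 0 ≤ c i * (U i ⬝ᵥ (B ω ^ K *ᵥ U i)) :=
      mul_nonneg (hc0 i) (psd_pow_dot (hpsd S ω) _ K)
    have h5 : (K + 1) * (c i * (U i ⬝ᵥ U i)) * (c i * (U i ⬝ᵥ (B ω ^ K *ᵥ U i))) ≤
        (K + 1) * κ * (c i * (U i ⬝ᵥ (B ω ^ K *ᵥ U i))) :=
      mul_le_mul_of_nonneg_right (mul_le_mul_of_nonneg_left (hκ i) (by positivity)) h4
    have hK : (0:ℝ) ≤ (K:ℝ) + 2 := by positivity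
    have h6 := mul_le_mul_of_nonneg_left h5 hK
    change _ - (_ + 2) * (_ - (_ + 1) * _ * (c i * (U i ⬝ᵥ (B ω ^ K *ᵥ U i)))) ≤ _
    linarith
  have hsum : ∑ i, π i * ((B ω - c i • vecMulVec (U i) (U i)) ^ (K + 2)).trace ≤
      (B ω ^ (K + 2)).trace - (K + 2) * (1 / m * (B ω ^ (K + 1)).trace
        - (K + 1) * κ * (1 / m * (B ω ^ K).trace)) := by
    refine (Finset.sum_le_sum fun i _ => mul_le_mul_of_nonneg_left (hstep i) (hπ i).le).trans ?_
    apply le_of_eq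
    have e : ∀ i, π i * ((B ω ^ (K + 2)).trace
        - (K + 2) * (c i * (U i ⬝ᵥ (B ω ^ (K + 1) *ᵥ U i))
        - (K + 1) * κ * (c i * (U i ⬝ᵥ (B ω ^ K *ᵥ U i))))) =
        π i * (B ω ^ (K + 2)).trace - ((K + 2) * (1 / m) * (U i ⬝ᵥ (B ω ^ (K + 1) *ᵥ U i))
        - (K + 2) * ((K + 1) * κ) * (1 / m) * (U i ⬝ᵥ (B ω ^ K *ᵥ U i))) := by
      intro i
      rw [← hcπ i]
      ring
    rw [Finset.sum_congr rfl fun i _ => e i, Finset.sum_sub_distrib, Finset.sum_sub_distrib,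
      ← Finset.sum_mul, h1, ← Finset.mul_sum, ← Finset.mul_sum, sum_row_form hU, sum_row_form hU]
    ring
  refine hsum.trans ?_
  have hb := hBlow ω
  have hu := hBup ω
  have ht1 : 0 ≤ (B ω ^ (K + 1)).trace := ((hpsd S ω).pow (K + 1)).trace_nonneg
  set x := (B ω ^ (K + 2)).trace
  set y := (B ω ^ (K + 1)).trace
  set z := (B ω ^ K).trace
  -- `(K+1) κ z ≤ y / 8` and `y ≥ x / N`
  have hz0 : 0 ≤ z := ((hpsd S ω).pow K).trace_nonneg
  have h7 : (K + 1) * κ * z ≤ y / 8 := by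
    have : 8 * κ * (K + 2) * z ≤ y := by rw [hN] at hb; linarith
    nlinarith [mul_nonneg hκ0.le hz0]
  have h8 : 7 / (128 * κ * m) * x ≤ (K + 2) * (7 / 8 * (1 / m * y)) := by
    have : x ≤ 16 * κ * (K + 2) * y := by rw [← hN]; exact hu
    calc 7 / (128 * κ * m) * x ≤ 7 / (128 * κ * m) * (16 * κ * (K + 2) * y) :=
          mul_le_mul_of_nonneg_left this (by positivity)
      _ = _ := by field_simp; ring
  have h9 : (K + 2) * (7 / 8 * (1 / m * y)) ≤
      (K + 2) * (1 / m * y - (K + 1) * κ * (1 / m * z)) := by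
    refine mul_le_mul_of_nonneg_left ?_ (by positivity)
    have : (1 / m : ℝ) * ((K + 1) * κ * z) ≤ 1 / m * (y / 8) :=
      mul_le_mul_of_nonneg_left h7 (by positivity)
    linarith
  linarith

open Classical in
/-- Lower tail of the matrix Chernoff bound for all draws but the `s`-th: Markov's inequality for
the trace of `(N - A)^(K+2)` with `K` large, a polynomial substitute for `tr exp(-tA)` with
`t = (K+2)/N = 1/(16 κ)`. -/
lemma chernoff_lower {U : Matrix (Fin n) (Fin p) ℝ} (hU : Uᵀ * U = 1) {π : Fin n → ℝ}
    (hπ : ∀ i, 0 < π i) (h1 : ∑ i, π i = 1) (hm : 0 < m) {κ : ℝ} (hκ0 : 0 < κ)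
    (hκ1 : κ ≤ 1 / 100) (hκm : 1 / m ≤ κ)
    (hκ : ∀ i, 1 / (m * π i) * (U i ⬝ᵥ U i) ≤ κ) (s : Fin m) :
    expct π (fun ω => if ∀ z, 1 / 2 * (z ⬝ᵥ z) ≤
        z ⬝ᵥ (gramOn (fun i => 1 / (m * π i)) U (Finset.univ.erase s) ω *ᵥ z) then 0 else 1)
      ≤ p * Real.exp (-(1 / (80 * κ))) := by
  set c : Fin n → ℝ := fun i => 1 / (m * π i) with hc
  have hm' : (0:ℝ) < m := by exact_mod_cast hm
  have hc0 : ∀ i, 0 ≤ c i := fun i => by have := hπ i; simp only [hc]; positivity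
  -- the exponent is large enough that `N ≥ 2 m κ`, which keeps `N - A ≥ N / 2`
  obtain ⟨K, hK⟩ := exists_nat_ge (max (m:ℝ) (1 / κ))
  have hKm : (m:ℝ) ≤ K := (le_max_left _ _).trans hK
  have hKκ : 1 / κ ≤ K := (le_max_right _ _).trans hK
  have hKκ' : 1 ≤ κ * K := by rwa [div_le_iff₀' hκ0] at hKκ
  obtain ⟨N, hN⟩ : ∃ N : ℝ, N = 16 * κ * (K + 2) := ⟨_, rfl⟩
  have hNm : 2 * (m * κ) ≤ N := by rw [hN]; nlinarith
  have hN16 : 16 ≤ N := by rw [hN]; nlinarith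
  have hN0 : 0 < N := by linarith
  set q : ℝ := 1 - 7 / (128 * κ * m) with hq
  have hq0 : 0 ≤ q := by
    have : 7 / (128 * κ * m) = 7 / 128 * (1 / m) / κ := by field_simp
    have h2 : 7 / 128 * (1 / m) / κ ≤ 1 := by
      rw [div_le_one hκ0]; linarith [show (0:ℝ) ≤ 1 / m by positivity]
    rw [hq, this]; linarith
  have hexp : ∀ S : Finset (Fin m),
      expct π (fun ω => ((N • 1 - gramOn c U S ω) ^ (K + 2)).trace) ≤
        p * N ^ (K + 2) * q ^ S.card := by
    intro S
    induction S using Finset.induction_on with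
    | empty =>
      have : ∀ ω : Fin m → Fin n, ((N • 1 - gramOn c U ∅ ω) ^ (K + 2)).trace
          = p * N ^ (K + 2) := by
        intro ω
        simp only [gramOn, Finset.sum_empty, sub_zero, smul_pow, one_pow, trace_smul, trace_one,
          Fintype.card_fin, smul_eq_mul]
        ring
      simp only [this, expct_const h1, Finset.card_empty, pow_zero, mul_one, le_refl]
    | insert t S ht ih =>
      refine (trace_step hU hπ h1 hm hκ0 hκ K hN hNm ht).trans ?_
      rw [Finset.card_insert_of_notMem ht, pow_succ q, ← mul_assoc]
      exact mul_le_mul_of_nonneg_right ih hq0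
  have hpsd : ∀ (T : Finset (Fin m)) (ω : Fin m → Fin n),
      (N • 1 - gramOn c U T ω).PosSemidef := by
    intro T ω
    refine psd_of ?_ fun z => ?_
    · simp only [transpose_sub, transpose_smul, transpose_one, gramOn_symm]
    · have h2 := gramOn_dot_le hc0 U hκ hκ0.le T ω z
      have hz := dot_self_nonneg z
      simp only [sub_mulVec, smul_mulVec, one_mulVec, dotProduct_sub, dotProduct_smul, smul_eq_mul]
      nlinarith
  -- Markov's inequality
  have hmark : ∀ ω : Fin m → Fin n, (if ∀ z, 1 / 2 * (z ⬝ᵥ z) ≤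
        z ⬝ᵥ (gramOn c U (Finset.univ.erase s) ω *ᵥ z) then (0:ℝ) else 1) * (N - 1 / 2) ^ (K + 2)
      ≤ ((N • 1 - gramOn c U (Finset.univ.erase s) ω) ^ (K + 2)).trace := by
    intro ω
    have hP := hpsd (Finset.univ.erase s) ω
    split_ifs with hgood
    · rw [zero_mul]; exact (hP.pow _).trace_nonneg
    · push Not at hgood
      obtain ⟨z, hz⟩ := hgood
      have hz0 : 0 < z ⬝ᵥ z := by
        refine (dot_self_nonneg z).lt_of_ne fun h0 => ?_
        rw [dotProduct_self_eq_zero.mp h0.symm] at hz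
        simp at hz
      set r := Real.sqrt (z ⬝ᵥ z) with hr
      have hr0 : 0 < r := Real.sqrt_pos.mpr hz0
      have hrr : r * r = z ⬝ᵥ z := Real.mul_self_sqrt hz0.le
      have hu : (r⁻¹ • z) ⬝ᵥ (r⁻¹ • z) = 1 := by
        rw [smul_dotProduct, dotProduct_smul, ← hrr, smul_eq_mul, smul_eq_mul]
        field_simp
      have hA : (r⁻¹ • z) ⬝ᵥ (gramOn c U (Finset.univ.erase s) ω *ᵥ (r⁻¹ • z)) ≤ 1 / 2 := by
        rw [mulVec_smul, smul_dotProduct, dotProduct_smul, smul_eq_mul, smul_eq_mul]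
        rw [← mul_assoc, ← mul_inv, hrr, inv_mul_le_iff₀ hz0]
        linarith
      rw [one_mul]
      refine le_trans ?_ (psd_dot_le_trace (hP.pow _) hu)
      refine le_trans ?_ (psd_jensen hP hu _)
      refine pow_le_pow_left₀ (by linarith) ?_ _
      rw [sub_mulVec, smul_mulVec, one_mulVec, dotProduct_sub, dotProduct_smul, hu, smul_eq_mul]
      linarith
  have hE := (expct_mono hπ hmark).trans (hexp _)
  rw [expct_mul_const] at hE
  have hM0 : 0 < (N - 1 / 2) ^ (K + 2) := pow_pos (by linarith) _
  refine le_of_mul_le_mul_right (hE.trans ?_) hM0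
  -- numerical comparison of the exponential rates
  have hcard : (Finset.univ.erase s).card = m - 1 := by
    rw [Finset.card_erase_of_mem (Finset.mem_univ s), Finset.card_univ, Fintype.card_fin]
  rw [hcard]
  have hqe : q ^ (m - 1) ≤ Real.exp (-(7 / (128 * κ) * (99 / 100))) := by
    have h2 : q ≤ Real.exp (-(7 / (128 * κ * m))) := by
      have := Real.add_one_le_exp (-(7 / (128 * κ * m)))
      linarith
    refine (pow_le_pow_left₀ hq0 h2 _).trans ?_
    rw [← Real.exp_nat_mul, Real.exp_le_exp, Nat.cast_sub hm]
    have h3 : ((m:ℝ) - 1) / m ≥ 99 / 100 := by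
      rw [sub_div, div_self hm'.ne']; linarith
    have h4 : ((m:ℝ) - ((1:ℕ):ℝ)) * -(7 / (128 * κ * m)) = -(7 / (128 * κ) * (((m:ℝ) - 1) / m)) := by
      push_cast
      field_simp
    rw [h4]
    exact neg_le_neg (mul_le_mul_of_nonneg_left h3 (by positivity))
  have hNe : N ^ (K + 2) ≤ (N - 1 / 2) ^ (K + 2) * Real.exp (3 / (80 * κ)) := by
    have h2 : N ≤ (N - 1 / 2) * Real.exp (3 / 5 / N) := by
      have := Real.add_one_le_exp (3 / 5 / N)
      have h3 : N ≤ (N - 1 / 2) * (3 / 5 / N + 1) := by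
        have : (N - 1 / 2) * (3 / 5 / N + 1) = N + 1 / 10 - 3 / 10 / N := by field_simp; ring
        rw [this]
        have : 3 / 10 / N ≤ 1 / 10 := by rw [div_le_iff₀ hN0]; linarith
        linarith
      exact h3.trans (mul_le_mul_of_nonneg_left this (by linarith))
    refine (pow_le_pow_left₀ hN0.le h2 _).trans ?_
    rw [mul_pow, ← Real.exp_nat_mul]
    refine mul_le_mul_of_nonneg_left (Real.exp_le_exp.mpr (le_of_eq ?_)) hM0.le
    rw [hN]
    push_cast
    field_simp
    ring
  calc (p:ℝ) * N ^ (K + 2) * q ^ (m - 1)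
      ≤ p * ((N - 1 / 2) ^ (K + 2) * Real.exp (3 / (80 * κ))) *
          Real.exp (-(7 / (128 * κ) * (99 / 100))) := by gcongr
    _ = p * (Real.exp (3 / (80 * κ)) * Real.exp (-(7 / (128 * κ) * (99 / 100)))) *
          (N - 1 / 2) ^ (K + 2) := by ring
    _ ≤ p * Real.exp (-(1 / (80 * κ))) * (N - 1 / 2) ^ (K + 2) := by
        rw [← Real.exp_add]
        gcongr
        have : 3 / (80 * κ) + -(7 / (128 * κ) * (99 / 100)) + 1 / (80 * κ)
            = (1 / κ) * (4 / 80 - 7 / 128 * (99 / 100)) := by field_simp; ring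
        have h2 : (1 / κ) * (4 / 80 - 7 / 128 * (99 / 100)) ≤ 0 :=
          mul_nonpos_of_nonneg_of_nonpos (by positivity) (by norm_num)
        linarith

end Chernoff

/-! ### Mean-square error of the leave-one-out Gram matrix -/

section Variance

variable {n p m : ℕ}

lemma frame_sum {U : Matrix (Fin n) (Fin p) ℝ} (hU : Uᵀ * U = 1) (v w : Fin p → ℝ) :
    ∑ i, (U i ⬝ᵥ v) * (U i ⬝ᵥ w) = v ⬝ᵥ w := by
  change (U *ᵥ v) ⬝ᵥ (U *ᵥ w) = _
  rw [dotProduct_mulVec, ← mulVec_transpose, mulVec_mulVec, hU, one_mulVec]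

lemma frame_sq {U : Matrix (Fin n) (Fin p) ℝ} (hU : Uᵀ * U = 1) (v : Fin p → ℝ) :
    ∑ i, (U i ⬝ᵥ v) ^ 2 = v ⬝ᵥ v := by
  rw [← frame_sum hU]
  exact Finset.sum_congr rfl fun i _ => sq _

lemma frame_expand {U : Matrix (Fin n) (Fin p) ℝ} (hU : Uᵀ * U = 1) (v : Fin p → ℝ) :
    ∑ i, (U i ⬝ᵥ v) • U i = v := by
  refine dotProduct_eq _ _ fun w => ?_
  rw [sum_dotProduct, ← frame_sum hU]
  exact Finset.sum_congr rfl fun i _ => by rw [smul_dotProduct, smul_eq_mul]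

/-- The operator `∑ c_i u_i u_iᵀ` has norm at most `max |c_i|`. -/
lemma frame_bound {U : Matrix (Fin n) (Fin p) ℝ} (hU : Uᵀ * U = 1) {c : Fin n → ℝ} {K : ℝ}
    (hc : ∀ i, c i ^ 2 ≤ K) (v : Fin p → ℝ) :
    (∑ i, (c i * (U i ⬝ᵥ v)) • U i) ⬝ᵥ (∑ i, (c i * (U i ⬝ᵥ v)) • U i) ≤ K * (v ⬝ᵥ v) := by
  set w := ∑ i, (c i * (U i ⬝ᵥ v)) • U i with hw
  have h1 : w ⬝ᵥ w = ∑ i, (c i * (U i ⬝ᵥ v)) * (U i ⬝ᵥ w) := by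
    nth_rw 1 [hw]
    rw [sum_dotProduct]
    exact Finset.sum_congr rfl fun i _ => by rw [smul_dotProduct, smul_eq_mul]
  have h2 : (w ⬝ᵥ w) ^ 2 ≤ (K * (v ⬝ᵥ v)) * (w ⬝ᵥ w) := by
    calc (w ⬝ᵥ w) ^ 2 = (∑ i, (c i * (U i ⬝ᵥ v)) * (U i ⬝ᵥ w)) ^ 2 := by rw [← h1]
      _ ≤ (∑ i, (c i * (U i ⬝ᵥ v)) ^ 2) * ∑ i, (U i ⬝ᵥ w) ^ 2 :=
          Finset.sum_mul_sq_le_sq_mul_sq _ _ _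
      _ ≤ (K * (v ⬝ᵥ v)) * (w ⬝ᵥ w) := by
          rw [frame_sq hU]
          refine mul_le_mul_of_nonneg_right ?_ (dot_self_nonneg w)
          rw [← frame_sq hU v, Finset.mul_sum]
          refine Finset.sum_le_sum fun i _ => ?_
          rw [mul_pow]
          exact mul_le_mul_of_nonneg_right (hc i) (sq_nonneg _)
  rcases (dot_self_nonneg w).eq_or_lt with h0 | h0
  · rw [← h0]
    have hv := dot_self_nonneg v
    rcases isEmpty_or_nonempty (Fin n) with hn | ⟨⟨i⟩⟩
    · have : v ⬝ᵥ v = 0 := by rw [← frame_sq hU]; simp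
      rw [this, mul_zero]
    · exact mul_nonneg ((sq_nonneg _).trans (hc i)) hv
  · rw [sq] at h2
    exact le_of_mul_le_mul_right h2 h0

/-- Variance of a sum of i.i.d. centred variables. -/
lemma var_scalar {π : Fin n → ℝ} (h1 : ∑ i, π i = 1) {g : Fin n → ℝ}
    (hg : ∑ i, π i * g i = 0) (S : Finset (Fin m)) :
    expct π (fun ω : Fin m → Fin n => (∑ s ∈ S, g (ω s)) ^ 2)
      = S.card * ∑ i, π i * g i ^ 2 := by
  induction S using Finset.induction_on with
  | empty => simp [expct]
  | insert s S hs ih =>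
    have hind := expct_indep h1 s (fun i ω => (g i + ∑ t ∈ S, g (ω t)) ^ 2) (fun i j ω => by
      congr 2
      refine Finset.sum_congr rfl fun t ht => ?_
      rw [Function.update_of_ne (by rintro rfl; exact hs ht)])
    simp only [Finset.sum_insert hs]
    rw [hind, Finset.card_insert_of_notMem hs, Nat.cast_add, Nat.cast_one, add_mul, one_mul, ← ih,
      add_comm]
    have : ∀ ω : Fin m → Fin n, ∑ i, π i * (g i + ∑ t ∈ S, g (ω t)) ^ 2 =
        ∑ i, π i * g i ^ 2 + (∑ t ∈ S, g (ω t)) ^ 2 := by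
      intro ω
      set R := ∑ t ∈ S, g (ω t)
      calc ∑ i, π i * (g i + R) ^ 2 = ∑ i, (π i * g i ^ 2 + π i * g i * (2 * R) + π i * R ^ 2) :=
            Finset.sum_congr rfl fun i _ => by ring
        _ = _ := by
            rw [Finset.sum_add_distrib, Finset.sum_add_distrib, ← Finset.sum_mul, hg,
              ← Finset.sum_mul, h1]
            ring
    simp only [this]
    rw [expct_add, expct_const h1]

/-- The total variance of a sum of i.i.d. vectors is at most the number of terms times the second
moment. -/
lemma var_vec {π : Fin n → ℝ} (h1 : ∑ i, π i = 1)
    (Z : Fin n → Fin p → ℝ) (S : Finset (Fin m)) :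
    expct π (fun ω : Fin m → Fin n =>
        (∑ s ∈ S, Z (ω s) - (S.card : ℝ) • ∑ i, π i • Z i) ⬝ᵥ
        (∑ s ∈ S, Z (ω s) - (S.card : ℝ) • ∑ i, π i • Z i))
      ≤ S.card * ∑ i, π i * (Z i ⬝ᵥ Z i) := by
  set d : Fin p → ℝ := ∑ i, π i • Z i with hd
  have hdk : ∀ k, d k = ∑ i, π i * Z i k := fun k => by simp [hd]
  have e : ∀ ω : Fin m → Fin n, (∑ s ∈ S, Z (ω s) - (S.card : ℝ) • d) ⬝ᵥ
      (∑ s ∈ S, Z (ω s) - (S.card : ℝ) • d) = ∑ k, (∑ s ∈ S, (Z (ω s) k - d k)) ^ 2 := by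
    intro ω
    refine Finset.sum_congr rfl fun k _ => ?_
    rw [Finset.sum_sub_distrib, Finset.sum_const, nsmul_eq_mul, sq]
    simp
  simp only [e]
  rw [expct_sum]
  have hk : ∀ k, expct π (fun ω : Fin m → Fin n => (∑ s ∈ S, (Z (ω s) k - d k)) ^ 2) ≤
      S.card * ∑ i, π i * Z i k ^ 2 := by
    intro k
    rw [var_scalar h1 (g := fun i => Z i k - d k)]
    · refine mul_le_mul_of_nonneg_left ?_ (Nat.cast_nonneg _)
      have : ∑ i, π i * (Z i k - d k) ^ 2 = ∑ i, π i * Z i k ^ 2 - d k ^ 2 := by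
        calc ∑ i, π i * (Z i k - d k) ^ 2
            = ∑ i, (π i * Z i k ^ 2 - π i * Z i k * (2 * d k) + π i * d k ^ 2) :=
              Finset.sum_congr rfl fun i _ => by ring
          _ = _ := by
              rw [Finset.sum_add_distrib, Finset.sum_sub_distrib, ← Finset.sum_mul, ← hdk,
                ← Finset.sum_mul, h1]
              ring
      rw [this]
      linarith [sq_nonneg (d k)]
    · simp only [mul_sub, Finset.sum_sub_distrib]
      rw [← hdk, ← Finset.sum_mul, h1, one_mul, sub_self]
  refine (Finset.sum_le_sum fun k _ => hk k).trans (le_of_eq ?_)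
  rw [← Finset.mul_sum, Finset.sum_comm]
  congr 1
  refine Finset.sum_congr rfl fun i _ => ?_
  rw [dotProduct, Finset.mul_sum]
  exact Finset.sum_congr rfl fun k _ => by rw [sq]

/-- Mean-square error of the leave-one-out debiased Gram matrix applied to a fixed vector. The
debiasing weights differ from the unbiased ones by a factor `1 + O(κ)`, and leaving one draw out
costs a factor `1 - 1/m`, so the bias is of lower order than the variance. -/
lemma gram_mse {U : Matrix (Fin n) (Fin p) ℝ} (hU : Uᵀ * U = 1) {π : Fin n → ℝ}
    (hπ : ∀ i, 0 < π i) (h1 : ∑ i, π i = 1) (hm : 0 < m) {κ : ℝ} (hκ0 : 0 < κ)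
    (hκ1 : κ ≤ 1 / 100) (hκm : 1 / m ≤ κ)
    (hκ : ∀ i, 1 / (m * π i) * (U i ⬝ᵥ U i) ≤ κ) {a : Fin n → ℝ}
    (ha : ∀ i, a i * (1 - 1 / (m * π i) * (U i ⬝ᵥ U i)) = 1 / (m * π i)) (s : Fin m)
    (u : Fin p → ℝ) :
    expct π (fun ω : Fin m → Fin n =>
        (gramOn a U (Finset.univ.erase s) ω *ᵥ u - u) ⬝ᵥ
        (gramOn a U (Finset.univ.erase s) ω *ᵥ u - u)) ≤ 8 * κ * (u ⬝ᵥ u) := by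
  have hm' : (0:ℝ) < m := by exact_mod_cast hm
  have hcard : ((Finset.univ.erase s).card : ℝ) = m - 1 := by
    rw [Finset.card_erase_of_mem (Finset.mem_univ s), Finset.card_univ, Fintype.card_fin,
      Nat.cast_sub hm, Nat.cast_one]
  set S := Finset.univ.erase s
  have hℓ : ∀ i, 0 ≤ U i ⬝ᵥ U i := fun i => dot_self_nonneg _
  have hw0 : ∀ i, 0 < 1 / (m * π i) := fun i => by have := hπ i; positivity
  have hwℓ : ∀ i, 0 ≤ 1 / (m * π i) * (U i ⬝ᵥ U i) := fun i => mul_nonneg (hw0 i).le (hℓ i)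
  have ha0 : ∀ i, 0 ≤ a i := fun i => by
    by_contra! h
    nlinarith [hw0 i, ha i, hκ i]
  have haw : ∀ i, a i ≤ 100 / 99 * (1 / (m * π i)) := fun i => by
    nlinarith [ha i, hκ i, ha0 i]
  have hπw : ∀ i, π i * (1 / (m * π i)) = 1 / m := fun i => by have := (hπ i).ne'; field_simp
  set Z : Fin n → Fin p → ℝ := fun i => (a i * (U i ⬝ᵥ u)) • U i with hZ
  have hv := var_vec (m := m) h1 Z S
  have hu0 := dot_self_nonneg u
  have hvar : (S.card : ℝ) * ∑ i, π i * (Z i ⬝ᵥ Z i) ≤ 2 * κ * (u ⬝ᵥ u) := by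
    have hterm : ∀ i, π i * (Z i ⬝ᵥ Z i) ≤ 1 / m * (2 * κ) * (U i ⬝ᵥ u) ^ 2 := by
      intro i
      have h2 : π i * (a i * (a i * (U i ⬝ᵥ U i))) ≤ 1 / m * (2 * κ) := by
        have h3 : a i * (U i ⬝ᵥ U i) ≤ 100 / 99 * κ := by
          calc a i * (U i ⬝ᵥ U i) ≤ 100 / 99 * (1 / (m * π i)) * (U i ⬝ᵥ U i) :=
                mul_le_mul_of_nonneg_right (haw i) (hℓ i)
            _ ≤ _ := by linarith [hκ i]
        calc π i * (a i * (a i * (U i ⬝ᵥ U i)))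
            ≤ π i * (100 / 99 * (1 / (m * π i)) * (100 / 99 * κ)) := by
              refine mul_le_mul_of_nonneg_left ?_ (hπ i).le
              exact mul_le_mul (haw i) h3 (mul_nonneg (ha0 i) (hℓ i))
                (by have := hw0 i; positivity)
          _ = (π i * (1 / (m * π i))) * (100 / 99 * (100 / 99) * κ) := by ring
          _ ≤ 1 / m * (2 * κ) := by
              rw [hπw]
              refine mul_le_mul_of_nonneg_left ?_ (by positivity)
              linarith
      simp only [hZ, smul_dotProduct, dotProduct_smul, smul_eq_mul]
      calc _ = π i * (a i * (a i * (U i ⬝ᵥ U i))) * (U i ⬝ᵥ u) ^ 2 := by ring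
        _ ≤ _ := mul_le_mul_of_nonneg_right h2 (sq_nonneg _)
    have h4 : ∑ i, π i * (Z i ⬝ᵥ Z i) ≤ 1 / m * (2 * κ) * (u ⬝ᵥ u) := by
      rw [← frame_sq hU u, Finset.mul_sum]
      exact Finset.sum_le_sum fun i _ => hterm i
    calc (S.card : ℝ) * ∑ i, π i * (Z i ⬝ᵥ Z i)
        ≤ m * (1 / m * (2 * κ) * (u ⬝ᵥ u)) := by
          refine mul_le_mul (by rw [hcard]; linarith) h4 ?_ hm'.le
          exact Finset.sum_nonneg fun i _ => mul_nonneg (hπ i).le (dot_self_nonneg _)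
      _ = _ := by field_simp
  -- the bias
  set b : Fin p → ℝ := (S.card : ℝ) • ∑ i, π i • Z i - u with hb
  have hbias : b ⬝ᵥ b ≤ (2 * κ) ^ 2 * (u ⬝ᵥ u) := by
    have hbe : b = ∑ i, (((m - 1) * (π i * a i) - 1) * (U i ⬝ᵥ u)) • U i := by
      have hb2 : b = (S.card : ℝ) • ∑ i, π i • Z i - ∑ i, (U i ⬝ᵥ u) • U i := by
        rw [frame_expand hU u]
      rw [hb2, hcard, Finset.smul_sum, ← Finset.sum_sub_distrib]
      refine Finset.sum_congr rfl fun i _ => ?_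
      rw [hZ]
      simp only
      rw [smul_smul, smul_smul, ← sub_smul]
      congr 1
      ring
    rw [hbe]
    refine frame_bound hU (fun i => ?_) u
    have hlo : 1 / m ≤ π i * a i := by
      rw [← hπw i]
      refine mul_le_mul_of_nonneg_left ?_ (hπ i).le
      have := mul_nonneg (ha0 i) (hwℓ i)
      linarith [ha i]
    have hhi : π i * a i * (1 - κ) ≤ 1 / m := by
      have := mul_nonneg (ha0 i) (sub_nonneg.mpr (hκ i))
      calc π i * a i * (1 - κ) = π i * (a i * (1 - κ)) := by ring
        _ ≤ π i * (1 / (m * π i)) :=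
            mul_le_mul_of_nonneg_left (by linarith [ha i]) (hπ i).le
        _ = _ := hπw i
    set t := π i * a i
    have hm1 : (1:ℝ) ≤ m := by exact_mod_cast hm
    have hmm : (m:ℝ) * (1 / m) = 1 := by field_simp
    have hmt : 1 ≤ m * t := by
      rw [← hmm]; exact mul_le_mul_of_nonneg_left hlo hm'.le
    have hmt2 : m * t * (1 - κ) ≤ 1 := by
      calc m * t * (1 - κ) = m * (t * (1 - κ)) := by ring
        _ ≤ m * (1 / m) := mul_le_mul_of_nonneg_left hhi hm'.le
        _ = 1 := hmm
    have hmt3 : m * t ≤ 1 + 100 / 99 * κ := by nlinarith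
    have hmt4 : (m:ℝ) * t ≤ 100 / 99 := by nlinarith
    have ht : t ≤ 2 * κ := by
      have : t = 1 / m * (m * t) := by field_simp
      rw [this]
      calc 1 / m * (m * t) ≤ κ * (100 / 99) := mul_le_mul hκm hmt4 (by linarith) hκ0.le
        _ ≤ _ := by linarith
    have ht0 : 0 ≤ t := by
      have : (0:ℝ) ≤ 1 / m := by positivity
      linarith
    refine sq_le_sq' ?_ ?_ <;> linarith
  have hpt : ∀ ω : Fin m → Fin n, (gramOn a U S ω *ᵥ u - u) ⬝ᵥ (gramOn a U S ω *ᵥ u - u) ≤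
      2 * ((∑ s ∈ S, Z (ω s) - (S.card : ℝ) • ∑ i, π i • Z i) ⬝ᵥ
        (∑ s ∈ S, Z (ω s) - (S.card : ℝ) • ∑ i, π i • Z i)) + 2 * (b ⬝ᵥ b) := by
    intro ω
    rw [gramOn_mulVec]
    change (∑ s ∈ S, Z (ω s) - u) ⬝ᵥ (∑ s ∈ S, Z (ω s) - u) ≤ _
    have e : ∑ s ∈ S, Z (ω s) - u =
        (∑ s ∈ S, Z (ω s) - (S.card : ℝ) • ∑ i, π i • Z i) + b := by rw [hb]; abel
    rw [e]
    set x := ∑ s ∈ S, Z (ω s) - (S.card : ℝ) • ∑ i, π i • Z i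
    have := dot_self_nonneg (x - b)
    simp only [sub_dotProduct, dotProduct_sub, add_dotProduct, dotProduct_add] at this ⊢
    linarith
  refine (expct_mono hπ hpt).trans ?_
  rw [expct_add, expct_const_mul, expct_const h1]
  have : (2 * κ) ^ 2 * (u ⬝ᵥ u) ≤ κ * (u ⬝ᵥ u) :=
    mul_le_mul_of_nonneg_right (by nlinarith) hu0
  linarith [mul_nonneg hκ0.le hu0]

end Variance

/-! ### Leave-one-out expansion of a single draw -/

section Core

variable {n p m : ℕ}

lemma frame_cs {U : Matrix (Fin n) (Fin p) ℝ} (hU : Uᵀ * U = 1) (r : Fin n → ℝ)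
    (v : Fin p → ℝ) : (∑ i, |r i| * |U i ⬝ᵥ v|) ^ 2 ≤ (r ⬝ᵥ r) * (v ⬝ᵥ v) := by
  refine (Finset.sum_mul_sq_le_sq_mul_sq _ _ _).trans (le_of_eq ?_)
  rw [← frame_sq hU v]
  congr 1
  · exact Finset.sum_congr rfl fun i _ => by rw [sq_abs, sq]
  · exact Finset.sum_congr rfl fun i _ => by rw [sq_abs]

/-- Cauchy–Schwarz for the product of the sampling distribution and counting measure. -/
lemma expct_cs {π : Fin n → ℝ} (hπ : ∀ i, 0 < π i) (f g : Fin n → (Fin m → Fin n) → ℝ) :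
    (expct π fun ω => ∑ i, f i ω * g i ω) ^ 2 ≤
      (expct π fun ω => ∑ i, f i ω ^ 2) * expct π fun ω => ∑ i, g i ω ^ 2 := by
  have e : ∀ F : Fin n → (Fin m → Fin n) → ℝ, (expct π fun ω => ∑ i, F i ω) =
      ∑ z : (Fin m → Fin n) × Fin n, samplingP π z.1 * F z.2 z.1 := by
    intro F
    rw [Fintype.sum_prod_type]
    exact Finset.sum_congr rfl fun ω _ => Finset.mul_sum _ _ _
  rw [e (fun i ω => f i ω * g i ω), e (fun i ω => f i ω ^ 2), e (fun i ω => g i ω ^ 2)]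
  refine Finset.sum_sq_le_sum_mul_sum_of_sq_le_mul _
    (fun z _ => mul_nonneg (samplingP_nonneg hπ _) (sq_nonneg _))
    (fun z _ => mul_nonneg (samplingP_nonneg hπ _) (sq_nonneg _)) (fun z _ => le_of_eq ?_)
  ring

/-- The first-order expansion of `a v·A⁻¹u` around `w v·B⁻¹u`, where `A = B + a u uᵀ` and the
weights satisfy `a = w / (1 - w |u|²)`: the debiasing weight `a` is chosen so that the error
involves only the fluctuation `w u·(B⁻¹ - 1)u`, which is controlled by `(B - 1)u`. -/
lemma debias_step {A B : Matrix (Fin p) (Fin p) ℝ} {a w κ : ℝ} {u : Fin p → ℝ}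
    (hAB : A = B + a • vecMulVec u u) (hBs : Bᵀ = B)
    (hA : ∀ z, 1 / 4 * (z ⬝ᵥ z) ≤ z ⬝ᵥ (A *ᵥ z))
    (hB : ∀ z, 1 / 4 * (z ⬝ᵥ z) ≤ z ⬝ᵥ (B *ᵥ z)) (hw : 0 < w)
    (hwu : w * (u ⬝ᵥ u) ≤ κ) (hκ1 : κ ≤ 1 / 100) (ha : a * (1 - w * (u ⬝ᵥ u)) = w)
    (v : Fin p → ℝ) :
    |a * (v ⬝ᵥ (A⁻¹ *ᵥ u)) - w * (v ⬝ᵥ (B⁻¹ *ᵥ u))| ≤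
      2 * (w * |v ⬝ᵥ (B⁻¹ *ᵥ u)|) * |w * ((B⁻¹ *ᵥ u) ⬝ᵥ u - u ⬝ᵥ u)| := by
  have hsm := sherman_morrison hAB (isUnit_det_of_quarter hA) (isUnit_det_of_quarter hB)
  have hq : v ⬝ᵥ (B⁻¹ *ᵥ u) = (1 + a * (u ⬝ᵥ (B⁻¹ *ᵥ u))) * (v ⬝ᵥ (A⁻¹ *ᵥ u)) := by
    nth_rw 1 [hsm]
    rw [dotProduct_smul, smul_eq_mul]
  have hf := inv_form_nonneg hBs hB u
  rw [dotProduct_comm (B⁻¹ *ᵥ u) u]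
  set f := u ⬝ᵥ (B⁻¹ *ᵥ u)
  set q := v ⬝ᵥ (B⁻¹ *ᵥ u)
  set g := v ⬝ᵥ (A⁻¹ *ᵥ u)
  set ℓ := u ⬝ᵥ u
  obtain ⟨x, hx⟩ : ∃ x, x = w * (f - ℓ) := ⟨_, rfl⟩
  rw [← hx]
  have hx1 : 1 / 2 ≤ 1 + x := by
    rw [hx]; nlinarith [mul_nonneg hw.le hf]
  have hwq : w * q = (1 + x) * (a * g) := by
    rw [hq, hx]
    have : w * (1 + a * f) = (1 + w * (f - ℓ)) * a := by linear_combination -ha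
    linear_combination g * this
  have e : a * g - w * q = -(x * (a * g)) := by rw [hwq]; ring
  have hag : |a * g| ≤ 2 * (w * |q|) := by
    have h1 : w * |q| = (1 + x) * |a * g| := by
      calc w * |q| = |w * q| := by rw [abs_mul, abs_of_pos hw]
        _ = _ := by rw [hwq, abs_mul, abs_of_pos (by linarith : (0:ℝ) < 1 + x)]
    rw [h1]
    nlinarith [abs_nonneg (a * g)]
  rw [e, abs_neg, abs_mul, mul_comm]
  exact mul_le_mul_of_nonneg_right hag (abs_nonneg _)

/-- Since `B⁻¹ - 1 = -B⁻¹ (B - 1)`, the fluctuation of `uᵀ B⁻¹ u` is controlled by `(B - 1) u`. -/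
lemma fluct_sq_le {B : Matrix (Fin p) (Fin p) ℝ} (hBs : Bᵀ = B)
    (hB : ∀ z, 1 / 4 * (z ⬝ᵥ z) ≤ z ⬝ᵥ (B *ᵥ z)) (u : Fin p → ℝ) :
    ((B⁻¹ *ᵥ u) ⬝ᵥ u - u ⬝ᵥ u) ^ 2 ≤
      16 * (u ⬝ᵥ u) * ((B *ᵥ u - u) ⬝ᵥ (B *ᵥ u - u)) := by
  have hu := isUnit_det_of_quarter hB
  have e : (B⁻¹ *ᵥ u) ⬝ᵥ u - u ⬝ᵥ u = -((B⁻¹ *ᵥ u) ⬝ᵥ (B *ᵥ u - u)) := by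
    rw [dotProduct_sub, symm_dot hBs, mulVec_mulVec, mul_nonsing_inv _ hu, one_mulVec]
    ring
  rw [e, neg_sq]
  exact (dot_sq_le _ _).trans (mul_le_mul_of_nonneg_right (inv_norm_le hB u) (dot_self_nonneg _))

/-- Enlarging the weights and adding draws preserves a lower bound on the Gram matrix. -/
lemma gram_good_of_raw {w a : Fin n → ℝ} (hw0 : ∀ i, 0 ≤ w i) (hwa : ∀ i, w i ≤ a i)
    {U : Matrix (Fin n) (Fin p) ℝ} {S : Finset (Fin m)} {ω : Fin m → Fin n}
    (h : ∀ z, 1 / 2 * (z ⬝ᵥ z) ≤ z ⬝ᵥ (gramOn w U S ω *ᵥ z)) (z : Fin p → ℝ) :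
    1 / 2 * (z ⬝ᵥ z) ≤ z ⬝ᵥ (gramOn a U Finset.univ ω *ᵥ z) := by
  refine (h z).trans ?_
  rw [gramOn_dot, gramOn_dot]
  refine (Finset.sum_le_sum fun t _ => mul_le_mul_of_nonneg_right (hwa (ω t))
    (sq_nonneg _)).trans ?_
  exact Finset.sum_le_sum_of_subset_of_nonneg (Finset.subset_univ _)
    fun t _ _ => mul_nonneg ((hw0 _).trans (hwa _)) (sq_nonneg _)

open Classical in
/-- Contribution of the `s`-th draw to the bias. By `debias_step` it is a main term, which depends
on the draw only through `r_i u_i` and averages to zero, plus an error of size `τ` from the samples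
on which the leave-one-out matrix is not under control, plus a fluctuation of size `κ^{3/2}`. -/
lemma draw_bound {U : Matrix (Fin n) (Fin p) ℝ} (hU : Uᵀ * U = 1) {π : Fin n → ℝ}
    (hπ : ∀ i, 0 < π i) (h1 : ∑ i, π i = 1) (hm : 0 < m) {κ : ℝ} (hκ0 : 0 < κ)
    (hκ1 : κ ≤ 1 / 100) (hκm : 1 / m ≤ κ)
    (hκ : ∀ i, 1 / (m * π i) * (U i ⬝ᵥ U i) ≤ κ) {a : Fin n → ℝ}
    (ha : ∀ i, a i * (1 - 1 / (m * π i) * (U i ⬝ᵥ U i)) = 1 / (m * π i))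
    {r : Fin n → ℝ} (hr : ∑ i, r i • U i = 0) {τ : ℝ}
    (hτ : p * Real.exp (-(1 / (80 * κ))) ≤ τ) (s : Fin m) (v : Fin p → ℝ) :
    |expct π (fun ω : Fin m → Fin n =>
        if ∀ z, 1 / 2 * (z ⬝ᵥ z) ≤ z ⬝ᵥ (gramOn a U Finset.univ ω *ᵥ z) then
          r (ω s) * (a (ω s) * (v ⬝ᵥ ((gramOn a U Finset.univ ω)⁻¹ *ᵥ U (ω s)))) else 0)| ≤
      1 / m * ((4 * τ + 92 * (κ * Real.sqrt κ)) *
        (Real.sqrt (r ⬝ᵥ r) * Real.sqrt (v ⬝ᵥ v))) := by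
  have hm' : (0:ℝ) < m := by exact_mod_cast hm
  set S := Finset.univ.erase s with hS
  have hsS : s ∉ S := Finset.notMem_erase _ _
  have hins : ∀ ω : Fin m → Fin n, gramOn a U Finset.univ ω =
      gramOn a U S ω + a (ω s) • vecMulVec (U (ω s)) (U (ω s)) := by
    intro ω
    rw [add_comm, ← gramOn_insert a U hsS, hS, Finset.insert_erase (Finset.mem_univ s)]
  set w : Fin n → ℝ := fun i => 1 / (m * π i) with hw
  have hℓ : ∀ i, 0 ≤ U i ⬝ᵥ U i := fun i => dot_self_nonneg _
  have hw0 : ∀ i, 0 < w i := fun i => by have := hπ i; simp only [hw]; positivity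
  have hπw : ∀ i, π i * w i = 1 / m := fun i => by
    have := (hπ i).ne'; simp only [hw]; field_simp
  have ha' : ∀ i, a i * (1 - w i * (U i ⬝ᵥ U i)) = w i := ha
  have hκ' : ∀ i, w i * (U i ⬝ᵥ U i) ≤ κ := hκ
  have hwℓ : ∀ i, 0 ≤ w i * (U i ⬝ᵥ U i) := fun i => mul_nonneg (hw0 i).le (hℓ i)
  have ha0 : ∀ i, 0 ≤ a i := fun i => by
    by_contra! h
    nlinarith [hw0 i, ha' i, hκ' i]
  have hwa : ∀ i, w i ≤ a i := fun i => by
    linarith [ha' i, mul_nonneg (ha0 i) (hwℓ i)]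
  have haℓ : ∀ i, a i * (U i ⬝ᵥ U i) ≤ 1 / 4 := fun i => by
    have h2 : a i ≤ 2 * w i := by nlinarith [ha' i, hκ' i, ha0 i]
    calc a i * (U i ⬝ᵥ U i) ≤ 2 * w i * (U i ⬝ᵥ U i) := mul_le_mul_of_nonneg_right h2 (hℓ i)
      _ ≤ _ := by linarith [hκ' i]
  -- `raw → good → loo`, where `raw` and `loo` do not depend on the `s`-th draw: expectations are
  -- taken on `loo`, and the complement of `raw` is the exceptional event
  set good : (Fin m → Fin n) → Prop := fun ω =>
    ∀ z, 1 / 2 * (z ⬝ᵥ z) ≤ z ⬝ᵥ (gramOn a U Finset.univ ω *ᵥ z) with hgood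
  set loo : (Fin m → Fin n) → Prop := fun ω =>
    ∀ z, 1 / 4 * (z ⬝ᵥ z) ≤ z ⬝ᵥ (gramOn a U S ω *ᵥ z) with hloo
  set raw : (Fin m → Fin n) → Prop := fun ω =>
    ∀ z, 1 / 2 * (z ⬝ᵥ z) ≤ z ⬝ᵥ (gramOn w U S ω *ᵥ z) with hraw
  have hgl : ∀ ω, good ω → loo ω := by
    intro ω h z
    have h2 := h z
    rw [hins, add_mulVec, smul_mulVec, vecMulVec_mulVec, op_smul_eq_smul, smul_smul,
      dotProduct_add, dotProduct_smul, smul_eq_mul, dotProduct_comm z (U (ω s))] at h2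
    have h3 := mul_le_mul_of_nonneg_left (dot_sq_le (U (ω s)) z) (ha0 (ω s))
    have h4 := mul_le_mul_of_nonneg_right (haℓ (ω s)) (dot_self_nonneg z)
    linarith
  have hrg : ∀ ω, raw ω → good ω := fun ω h => gram_good_of_raw (fun i => (hw0 i).le) hwa h
  have hlooup : ∀ ω j, loo (Function.update ω s j) ↔ loo ω := fun ω j => by
    simp only [hloo, gramOn_update a U hsS]
  have hrawup : ∀ ω j, raw (Function.update ω s j) ↔ raw ω := fun ω j => by
    simp only [hraw, gramOn_update w U hsS]
  set H : (Fin m → Fin n) → ℝ := fun ω => if loo ω then 1 else 0 with hH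
  set G : (Fin m → Fin n) → ℝ := fun ω => if raw ω then 0 else 1 with hG
  have hHup : ∀ ω j, H (Function.update ω s j) = H ω := fun ω j => by
    simp only [hH, hlooup]
  have hGup : ∀ ω j, G (Function.update ω s j) = G ω := fun ω j => by
    simp only [hG, hrawup]
  have hH0 : ∀ ω, 0 ≤ H ω := fun ω => by simp only [hH]; split_ifs <;> norm_num
  have hH1 : ∀ ω, H ω ≤ 1 := fun ω => by simp only [hH]; split_ifs <;> norm_num
  have hG0 : ∀ ω, 0 ≤ G ω := fun ω => by simp only [hG]; split_ifs <;> norm_num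
  have hGτ : expct π G ≤ τ :=
    (chernoff_lower hU hπ h1 hm hκ0 hκ1 hκm hκ s).trans hτ
  set q : Fin n → (Fin m → Fin n) → ℝ := fun i ω => v ⬝ᵥ ((gramOn a U S ω)⁻¹ *ᵥ U i) with hq
  have hqup : ∀ i j ω, q i (Function.update ω s j) = q i ω := fun i j ω => by
    simp only [hq, gramOn_update a U hsS]
  set x : Fin n → (Fin m → Fin n) → ℝ := fun i ω =>
    w i * (((gramOn a U S ω)⁻¹ *ᵥ U i) ⬝ᵥ U i - U i ⬝ᵥ U i) with hx
  have hxup : ∀ i j ω, x i (Function.update ω s j) = x i ω := fun i j ω => by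
    simp only [hx, gramOn_update a U hsS]
  have hqU : ∀ i ω, q i ω = U i ⬝ᵥ ((gramOn a U S ω)⁻¹ *ᵥ v) := by
    intro i ω
    simp only [hq]
    rw [symm_dot (by rw [transpose_nonsing_inv, gramOn_symm]), dotProduct_comm]
  have hv0 := dot_self_nonneg v
  have hr0 := dot_self_nonneg r
  set nr := Real.sqrt (r ⬝ᵥ r) with hnr
  set nv := Real.sqrt (v ⬝ᵥ v) with hnv
  have hnr0 : 0 ≤ nr := Real.sqrt_nonneg _
  have hnv0 : 0 ≤ nv := Real.sqrt_nonneg _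
  have hnr2 : nr ^ 2 = r ⬝ᵥ r := Real.sq_sqrt hr0
  have hnv2 : nv ^ 2 = v ⬝ᵥ v := Real.sq_sqrt hv0
  set Y : (Fin m → Fin n) → ℝ := fun ω => if good ω then
    r (ω s) * (a (ω s) * (v ⬝ᵥ ((gramOn a U Finset.univ ω)⁻¹ *ᵥ U (ω s)))) else 0 with hY
  set F : Fin n → (Fin m → Fin n) → ℝ := fun i ω => H ω * (r i * (w i * q i ω)) with hF
  set G1 : Fin n → (Fin m → Fin n) → ℝ := fun i ω => w i * (H ω * G ω * (|r i| * |q i ω|)) with hG1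
  set G2 : Fin n → (Fin m → Fin n) → ℝ := fun i ω =>
    w i * (2 * (H ω * (|q i ω| * (|r i| * |x i ω|)))) with hG2
  have hpt : ∀ ω, |Y ω - F (ω s) ω| ≤ G1 (ω s) ω + G2 (ω s) ω := by
    intro ω
    have hG1n : 0 ≤ G1 (ω s) ω := by
      have := hH0 ω; have := hG0 ω; have := (hw0 (ω s)).le
      simp only [hG1]; positivity
    have hG2n : 0 ≤ G2 (ω s) ω := by
      have := hH0 ω; have := (hw0 (ω s)).le
      simp only [hG2]; positivity
    by_cases hg : good ω
    · have hl := hgl ω hg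
      have hstep := debias_step (hins ω) (gramOn_symm a U S ω)
        (fun z => le_trans (by linarith [dot_self_nonneg z]) (hg z)) hl (hw0 (ω s)) (hκ' (ω s)) hκ1
        (ha' (ω s)) v
      have e : Y ω - F (ω s) ω = r (ω s) *
          (a (ω s) * (v ⬝ᵥ ((gramOn a U Finset.univ ω)⁻¹ *ᵥ U (ω s))) - w (ω s) * q (ω s) ω) := by
        simp only [hY, hF, hH, if_pos hg, if_pos hl]
        ring
      rw [e, abs_mul]
      have h5 := mul_le_mul_of_nonneg_left hstep (abs_nonneg (r (ω s)))
      have h6 : |r (ω s)| * (2 * (w (ω s) * |q (ω s) ω|) * |x (ω s) ω|) = G2 (ω s) ω := by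
        simp only [hG2, hH, if_pos hl]
        ring
      refine (h5.trans (le_of_eq h6)).trans ?_
      linarith
    · have hnr : ¬ raw ω := fun h => hg (hrg ω h)
      have e : |Y ω - F (ω s) ω| = G1 (ω s) ω := by
        simp only [hY, hF, hG1, hG, if_neg hg, if_neg hnr]
        rw [zero_sub, abs_neg, abs_mul, abs_mul, abs_mul, abs_of_nonneg (hH0 ω),
          abs_of_pos (hw0 _)]
        ring
      rw [e]
      linarith
  -- the main term has mean zero by the normal equations
  have hEF : expct π (fun ω => F (ω s) ω) = 0 := by
    rw [expct_indep h1 s F (fun i j ω => by simp only [hF, hHup, hqup])]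
    have : ∀ ω, ∑ i, π i * F i ω = 0 := by
      intro ω
      have e : ∀ i, π i * F i ω = H ω * (1 / m) *
          ((r i • U i) ⬝ᵥ ((gramOn a U S ω)⁻¹ *ᵥ v)) := by
        intro i
        rw [smul_dotProduct, smul_eq_mul, ← hqU, ← hπw i]
        simp only [hF]
        ring
      rw [Finset.sum_congr rfl fun i _ => e i, ← Finset.mul_sum, ← sum_dotProduct, hr,
        zero_dotProduct, mul_zero]
    simp only [this]
    exact expct_const h1 0
  have hqs : ∀ ω, H ω * ∑ i, q i ω ^ 2 ≤ 16 * (v ⬝ᵥ v) := by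
    intro ω
    simp only [hqU, frame_sq hU]
    by_cases hl : loo ω
    · simp only [hH, if_pos hl, one_mul]
      exact inv_norm_le hl v
    · simp only [hH, if_neg hl, zero_mul]
      positivity
  have hE1 : expct π (fun ω => G1 (ω s) ω) ≤ 1 / m * (τ * (4 * (nr * nv))) := by
    rw [expct_indep h1 s G1 (fun i j ω => by simp only [hG1, hHup, hGup, hqup])]
    have hb : ∀ ω, ∑ i, π i * G1 i ω ≤ G ω * (1 / m * (4 * (nr * nv))) := by
      intro ω
      have e : ∑ i, π i * G1 i ω = G ω * (1 / m * (H ω * ∑ i, |r i| * |q i ω|)) := by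
        rw [Finset.mul_sum, Finset.mul_sum, Finset.mul_sum]
        refine Finset.sum_congr rfl fun i _ => ?_
        rw [← hπw i]
        simp only [hG1]
        ring
      rw [e]
      refine mul_le_mul_of_nonneg_left (mul_le_mul_of_nonneg_left ?_ (by positivity)) (hG0 ω)
      by_cases hl : loo ω
      · have hH1' : H ω = 1 := by simp only [hH, if_pos hl]
        rw [hH1', one_mul]
        refine abs_le_of_sq_le_sq' ?_ (by positivity) |>.2
        simp only [hqU]
        refine (frame_cs hU r _).trans ?_
        calc _ ≤ (r ⬝ᵥ r) * (16 * (v ⬝ᵥ v)) := mul_le_mul_of_nonneg_left (inv_norm_le hl v) hr0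
          _ = _ := by rw [← hnr2, ← hnv2]; ring
      · have hH1' : H ω = 0 := by simp only [hH, if_neg hl]
        rw [hH1', zero_mul]
        positivity
    refine (expct_mono hπ hb).trans ?_
    rw [expct_mul_const]
    calc _ ≤ τ * (1 / m * (4 * (nr * nv))) := mul_le_mul_of_nonneg_right hGτ (by positivity)
      _ = _ := by ring
  have hE2 : expct π (fun ω => G2 (ω s) ω) ≤ 1 / m * (92 * (κ * Real.sqrt κ) * (nr * nv)) := by
    rw [expct_indep h1 s G2 (fun i j ω => by simp only [hG2, hHup, hxup, hqup])]
    have e : ∀ ω, ∑ i, π i * G2 i ω =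
        1 / m * (2 * ∑ i, (H ω * |q i ω|) * (H ω * (|r i| * |x i ω|))) := by
      intro ω
      rw [Finset.mul_sum, Finset.mul_sum]
      refine Finset.sum_congr rfl fun i _ => ?_
      rw [← hπw i]
      have hHH : H ω = H ω * H ω := by simp only [hH]; split_ifs <;> norm_num
      simp only [hG2]
      nth_rw 1 [hHH]
      ring
    simp only [e]
    rw [expct_const_mul, expct_const_mul]
    refine mul_le_mul_of_nonneg_left ?_ (by positivity)
    have hcs := expct_cs hπ (fun i ω => H ω * |q i ω|) (fun i ω => H ω * (|r i| * |x i ω|))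
    have hA : expct π (fun ω => ∑ i, (H ω * |q i ω|) ^ 2) ≤ 16 * nv ^ 2 := by
      rw [← expct_const (m := m) h1 (16 * nv ^ 2)]
      refine expct_mono hπ fun ω => ?_
      rw [hnv2]
      refine le_trans (le_of_eq ?_) (hqs ω)
      rw [Finset.mul_sum]
      refine Finset.sum_congr rfl fun i _ => ?_
      rw [mul_pow, sq_abs]
      simp only [hH]; split_ifs <;> norm_num
    have hB : expct π (fun ω => ∑ i, (H ω * (|r i| * |x i ω|)) ^ 2) ≤ 128 * κ ^ 3 * nr ^ 2 := by
      rw [expct_sum, hnr2]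
      have : ∀ i, expct π (fun ω => (H ω * (|r i| * |x i ω|)) ^ 2) ≤
          r i ^ 2 * (128 * κ ^ 3) := by
        intro i
        have hp : ∀ ω, (H ω * (|r i| * |x i ω|)) ^ 2 ≤ r i ^ 2 * (16 * (w i * (w i * (U i ⬝ᵥ U i))))
            * ((gramOn a U S ω *ᵥ U i - U i) ⬝ᵥ (gramOn a U S ω *ᵥ U i - U i)) := by
          intro ω
          have hd := dot_self_nonneg (gramOn a U S ω *ᵥ U i - U i)
          by_cases hl : loo ω
          · have hH1' : H ω = 1 := by simp only [hH, if_pos hl]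
            rw [hH1', one_mul, mul_pow, sq_abs, sq_abs]
            have h7 := fluct_sq_le (gramOn_symm a U S ω) hl (U i)
            have h8 := mul_le_mul_of_nonneg_left h7 (mul_nonneg (sq_nonneg (r i)) (sq_nonneg (w i)))
            calc r i ^ 2 * x i ω ^ 2 = r i ^ 2 * w i ^ 2 *
                  (((gramOn a U S ω)⁻¹ *ᵥ U i) ⬝ᵥ U i - U i ⬝ᵥ U i) ^ 2 := by simp only [hx]; ring
              _ ≤ _ := h8
              _ = _ := by ring
          · have hH1' : H ω = 0 := by simp only [hH, if_neg hl]
            rw [hH1', zero_mul]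
            have := mul_nonneg (hw0 i).le (hwℓ i)
            rw [zero_pow two_ne_zero]
            positivity
        refine (expct_mono hπ hp).trans ?_
        rw [expct_const_mul, mul_assoc]
        refine mul_le_mul_of_nonneg_left ?_ (sq_nonneg _)
        have hmse := gram_mse hU hπ h1 hm hκ0 hκ1 hκm hκ ha s (U i)
        have h9 := mul_le_mul_of_nonneg_left hmse
          (by have := mul_nonneg (hw0 i).le (hwℓ i); positivity :
            0 ≤ 16 * (w i * (w i * (U i ⬝ᵥ U i))))
        refine h9.trans ?_
        have h10 : (w i * (U i ⬝ᵥ U i)) ^ 2 ≤ κ ^ 2 := pow_le_pow_left₀ (hwℓ i) (hκ' i) 2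
        calc _ = 128 * κ * (w i * (U i ⬝ᵥ U i)) ^ 2 := by ring
          _ ≤ 128 * κ * κ ^ 2 := mul_le_mul_of_nonneg_left h10 (by positivity)
          _ = _ := by ring
      refine (Finset.sum_le_sum fun i _ => this i).trans (le_of_eq ?_)
      rw [← Finset.sum_mul, dotProduct]
      simp only [sq]
      ring
    have hsq : (expct π fun ω => ∑ i, (H ω * |q i ω|) * (H ω * (|r i| * |x i ω|))) ^ 2 ≤
        (46 * (κ * Real.sqrt κ) * (nr * nv)) ^ 2 := by
      refine hcs.trans ((mul_le_mul hA hB ?_ (by positivity)).trans ?_)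
      · rw [← expct_const (m := m) h1 0]
        exact expct_mono hπ fun ω => Finset.sum_nonneg fun i _ => sq_nonneg _
      · have hk : Real.sqrt κ ^ 2 = κ := Real.sq_sqrt hκ0.le
        calc 16 * nv ^ 2 * (128 * κ ^ 3 * nr ^ 2) = 2048 * (κ ^ 3 * (nr * nv) ^ 2) := by ring
          _ ≤ 46 ^ 2 * (κ ^ 3 * (nr * nv) ^ 2) := by
              refine mul_le_mul_of_nonneg_right (by norm_num) (by positivity)
          _ = 46 ^ 2 * (κ ^ 2 * Real.sqrt κ ^ 2) * (nr * nv) ^ 2 := by rw [hk]; ring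
          _ = _ := by ring
    have := (abs_le_of_sq_le_sq' hsq (by positivity)).2
    linarith
  have hsplit : expct π Y = expct π (fun ω => Y ω - F (ω s) ω) := by
    rw [expct_sub, hEF, sub_zero]
  rw [hsplit]
  refine (abs_expct_le hπ _).trans ((expct_mono hπ hpt).trans ?_)
  rw [expct_add]
  calc _ ≤ 1 / m * (τ * (4 * (nr * nv))) + 1 / m * (92 * (κ * Real.sqrt κ) * (nr * nv)) :=
        add_le_add hE1 hE2
    _ = _ := by ring

end Core

/-! ### The good event, and reduction to orthonormal columns -/

section Event

variable {n p m : ℕ}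

open Classical in
/-- The event that the sketched Gram matrix with weights `a` is bounded below by `1/2`. -/
def goodEvent (a : Fin n → ℝ) (U : Matrix (Fin n) (Fin p) ℝ) (m : ℕ) : Finset (Fin m → Fin n) :=
  Finset.univ.filter fun ω =>
    ∀ z, 1 / 2 * (z ⬝ᵥ z) ≤ z ⬝ᵥ (gramOn a U Finset.univ ω *ᵥ z)

lemma goodEvent_quarter {a : Fin n → ℝ} {U : Matrix (Fin n) (Fin p) ℝ} {ω : Fin m → Fin n}
    (hω : ω ∈ goodEvent a U m) (z : Fin p → ℝ) :
    1 / 4 * (z ⬝ᵥ z) ≤ z ⬝ᵥ (gramOn a U Finset.univ ω *ᵥ z) := by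
  have h : 1 / 2 * (z ⬝ᵥ z) ≤ z ⬝ᵥ (gramOn a U Finset.univ ω *ᵥ z) := by
    classical exact (Finset.mem_filter.mp hω).2 z
  linarith [dot_self_nonneg z]

lemma goodEvent_prob {U : Matrix (Fin n) (Fin p) ℝ} (hU : Uᵀ * U = 1) {π : Fin n → ℝ}
    (hπ : ∀ i, 0 < π i) (h1 : ∑ i, π i = 1) (hm : 0 < m) {κ : ℝ} (hκ0 : 0 < κ)
    (hκ1 : κ ≤ 1 / 100) (hκm : 1 / m ≤ κ)
    (hκ : ∀ i, 1 / (m * π i) * (U i ⬝ᵥ U i) ≤ κ) {a : Fin n → ℝ}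
    (hwa : ∀ i, 1 / (m * π i) ≤ a i) {τ : ℝ}
    (hτ : p * Real.exp (-(1 / (80 * κ))) ≤ τ) :
    1 - τ ≤ eventProb (samplingP π) (goodEvent a U m) := by
  classical
  have hm' : (0:ℝ) < m := by exact_mod_cast hm
  have hc := (chernoff_lower hU hπ h1 hm hκ0 hκ1 hκm hκ ⟨0, hm⟩).trans hτ
  set S := Finset.univ.erase (⟨0, hm⟩ : Fin m)
  have hE : eventProb (samplingP π) (goodEvent a U m) =
      expct π fun ω : Fin m → Fin n => if ω ∈ goodEvent a U m then 1 else 0 := by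
    simp only [expct, mul_ite, mul_one, mul_zero, eventProb, ← Finset.sum_filter,
      Finset.filter_univ_mem]
  have h2 : expct π (fun ω : Fin m → Fin n => 1 - if ω ∈ goodEvent a U m then (1:ℝ) else 0) ≤ τ := by
    refine (expct_mono hπ fun ω => ?_).trans hc
    split_ifs with h3 h4 h4
    · norm_num
    · norm_num
    · exact absurd (Finset.mem_filter.mpr ⟨Finset.mem_univ _, gram_good_of_raw
        (fun i => by have := hπ i; positivity) hwa h4⟩) h3
    · norm_num
  rw [expct_sub, expct_const h1, ← hE] at h2
  linarith

/-- The expected estimation error on the good event, in orthonormal coordinates: `draw_bound` is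
summed over the `m` draws with the error vector `E` itself as test vector. -/
lemma goodEvent_bias {U : Matrix (Fin n) (Fin p) ℝ} (hU : Uᵀ * U = 1) {π : Fin n → ℝ}
    (hπ : ∀ i, 0 < π i) (h1 : ∑ i, π i = 1) (hm : 0 < m) {κ : ℝ} (hκ0 : 0 < κ)
    (hκ1 : κ ≤ 1 / 100) (hκm : 1 / m ≤ κ)
    (hκ : ∀ i, 1 / (m * π i) * (U i ⬝ᵥ U i) ≤ κ) {a : Fin n → ℝ}
    (ha : ∀ i, a i * (1 - 1 / (m * π i) * (U i ⬝ᵥ U i)) = 1 / (m * π i))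
    {r : Fin n → ℝ} (hr : ∑ i, r i • U i = 0) {τ : ℝ}
    (hτ : p * Real.exp (-(1 / (80 * κ))) ≤ τ) {E : Fin p → ℝ}
    (hE : E = ∑ ω ∈ goodEvent a U m, samplingP π ω •
      ((gramOn a U Finset.univ ω)⁻¹ *ᵥ ∑ s, (a (ω s) * r (ω s)) • U (ω s))) :
    E ⬝ᵥ E ≤ (4 * τ + 92 * (κ * Real.sqrt κ)) ^ 2 * (r ⬝ᵥ r) := by
  classical
  have hm' : (0:ℝ) < m := by exact_mod_cast hm
  set K := 4 * τ + 92 * (κ * Real.sqrt κ) with hK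
  have hK0 : 0 ≤ K := by
    have : 0 ≤ τ := le_trans (by positivity) hτ
    positivity
  have hsum : E ⬝ᵥ E = ∑ s, expct π (fun ω : Fin m → Fin n =>
        if ∀ z, 1 / 2 * (z ⬝ᵥ z) ≤ z ⬝ᵥ (gramOn a U Finset.univ ω *ᵥ z) then
          r (ω s) * (a (ω s) * (E ⬝ᵥ ((gramOn a U Finset.univ ω)⁻¹ *ᵥ U (ω s)))) else 0) := by
    nth_rw 2 [hE]
    rw [← expct_sum, dotProduct_sum, goodEvent, Finset.sum_filter, expct]
    refine Finset.sum_congr rfl fun ω _ => ?_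
    split_ifs with h
    · rw [dotProduct_smul, smul_eq_mul, mulVec_sum, dotProduct_sum]
      congr 1
      refine Finset.sum_congr rfl fun s _ => ?_
      rw [mulVec_smul, dotProduct_smul, smul_eq_mul]
      ring
    · simp
  set nr := Real.sqrt (r ⬝ᵥ r) with hnr
  set nE := Real.sqrt (E ⬝ᵥ E) with hnE
  have hnr0 : 0 ≤ nr := Real.sqrt_nonneg _
  have hnE0 : 0 ≤ nE := Real.sqrt_nonneg _
  have hnr2 : nr ^ 2 = r ⬝ᵥ r := Real.sq_sqrt (dot_self_nonneg r)
  have hnE2 : nE ^ 2 = E ⬝ᵥ E := Real.sq_sqrt (dot_self_nonneg E)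
  have hle : nE ^ 2 ≤ K * nr * nE := by
    rw [hnE2, hsum]
    calc _ ≤ ∑ _s : Fin m, 1 / m * (K * (nr * nE)) :=
          Finset.sum_le_sum fun s _ => (le_abs_self _).trans
            (draw_bound hU hπ h1 hm hκ0 hκ1 hκm hκ ha hr hτ s E)
      _ = K * nr * nE := by
          rw [Finset.sum_const, Finset.card_univ, Fintype.card_fin, nsmul_eq_mul]
          field_simp
  have hle2 : nE ≤ K * nr := by
    rcases hnE0.eq_or_lt with h0 | h0
    · rw [← h0]; positivity
    · rw [sq] at hle
      exact le_of_mul_le_mul_right hle h0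
  rw [← hnE2, ← hnr2, ← mul_pow]
  exact pow_le_pow_left₀ hnE0 hle2 2

end Event

section Reduction

variable {n p m : ℕ}

open scoped MatrixOrder Matrix.Norms.L2Operator in
/-- A right factor `T` that orthonormalizes the columns of `X`. -/
lemma exists_orthonormalizer (X : Matrix (Fin n) (Fin p) ℝ) (hX : IsUnit (Xᵀ * X).det) :
    ∃ T : Matrix (Fin p) (Fin p) ℝ, IsUnit T.det ∧ (X * T)ᵀ * (X * T) = 1 ∧
      ∀ i, lev X i = (X * T) i ⬝ᵥ (X * T) i := by
  have hG : (Xᵀ * X).PosSemidef := by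
    have := posSemidef_conjTranspose_mul_self X
    rwa [conjTranspose_eq_transpose_of_trivial] at this
  obtain ⟨C, hC⟩ := CStarAlgebra.nonneg_iff_eq_star_mul_self.mp hG.inv.nonneg
  have hC' : (Xᵀ * X)⁻¹ = Cᵀ * C := by
    rw [hC, star_eq_conjTranspose, conjTranspose_eq_transpose_of_trivial]
  have hdet : IsUnit C.det := by
    have h2 : IsUnit ((Xᵀ * X)⁻¹).det := isUnit_nonsing_inv_det _ hX
    rw [hC', det_mul] at h2
    exact isUnit_of_mul_isUnit_right h2
  have hdetT : IsUnit Cᵀ.det := by rwa [det_transpose]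
  refine ⟨Cᵀ, hdetT, ?_, fun i => ?_⟩
  · have h3 : Xᵀ * X = C⁻¹ * Cᵀ⁻¹ := by
      rw [← Matrix.mul_inv_rev, ← hC', nonsing_inv_nonsing_inv _ hX]
    calc (X * Cᵀ)ᵀ * (X * Cᵀ) = C * (Xᵀ * X) * Cᵀ := by
          rw [transpose_mul, transpose_transpose]; simp only [Matrix.mul_assoc]
      _ = (C * C⁻¹) * (Cᵀ⁻¹ * Cᵀ) := by rw [h3]; simp only [Matrix.mul_assoc]
      _ = 1 := by rw [mul_nonsing_inv _ hdet, nonsing_inv_mul _ hdetT, Matrix.one_mul]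
  · have h4 : (X * Cᵀ) i = C *ᵥ X i := by
      funext k
      simp only [Matrix.mul_apply, mulVec, dotProduct, transpose_apply, mul_comm]
    rw [lev, hC', h4, ← mulVec_mulVec, dotProduct_mulVec, vecMul_transpose]

lemma sketch_entry (X : Matrix (Fin n) (Fin p) ℝ) (π : Fin n → ℝ) (ω : Fin m → Fin n)
    {l : ℕ} (M : Matrix (Fin n) (Fin l) ℝ) (s : Fin m) (k : Fin l) :
    (samplingSdeb X π ω * M) s k = 1 / Real.sqrt (1 - lev X (ω s) / (m * π (ω s))) *
      (1 / Real.sqrt (m * π (ω s))) * M (ω s) k := by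
  rw [samplingSdeb, Matrix.mul_assoc, diagonal_mul, Matrix.mul_apply]
  simp [samplingS, mul_assoc]

/-- The squared row scaling of the debiased sampling matrix is `w / (1 - w ℓ)` with
`w = 1/(m π)`. -/
lemma sketch_weight {X : Matrix (Fin n) (Fin p) ℝ} {π : Fin n → ℝ} (hm : 0 < m) {i : Fin n}
    (hπ : 0 < π i) (hl : lev X i < m * π i) :
    (1 / Real.sqrt (1 - lev X i / (m * π i)) * (1 / Real.sqrt (m * π i))) *
      (1 / Real.sqrt (1 - lev X i / (m * π i)) * (1 / Real.sqrt (m * π i))) =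
    1 / (m * π i) / (1 - 1 / (m * π i) * lev X i) := by
  have hm' : (0:ℝ) < m := by exact_mod_cast hm
  have h0 : 0 < m * π i := by positivity
  have h1 : 0 ≤ 1 - lev X i / (m * π i) := by
    rw [sub_nonneg, div_le_one h0]; exact hl.le
  have e : ∀ x y : ℝ, 1 / x * (1 / y) * (1 / x * (1 / y)) = 1 / (y * y) / (x * x) := by
    intro x y
    simp only [div_eq_mul_inv, mul_inv]
    ring
  rw [e, Real.mul_self_sqrt h0.le, Real.mul_self_sqrt h1]
  congr 2
  ring

lemma sketch_gram {X : Matrix (Fin n) (Fin p) ℝ} {π : Fin n → ℝ} (hm : 0 < m)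
    (hπ : ∀ i, 0 < π i) (hl : ∀ i, lev X i < m * π i) (ω : Fin m → Fin n) :
    (samplingSdeb X π ω * X)ᵀ * (samplingSdeb X π ω * X) =
      gramOn (fun i => 1 / (m * π i) / (1 - 1 / (m * π i) * lev X i)) X Finset.univ ω := by
  ext k l
  rw [Matrix.mul_apply, gramOn, Matrix.sum_apply]
  refine Finset.sum_congr rfl fun s _ => ?_
  rw [transpose_apply, sketch_entry, sketch_entry, Matrix.smul_apply, vecMulVec_apply,
    smul_eq_mul, ← sketch_weight hm (hπ (ω s)) (hl (ω s))]
  ring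

lemma sketch_rhs {X : Matrix (Fin n) (Fin p) ℝ} {π : Fin n → ℝ} (hm : 0 < m)
    (hπ : ∀ i, 0 < π i) (hl : ∀ i, lev X i < m * π i) (ω : Fin m → Fin n) (y : Fin n → ℝ) :
    (samplingSdeb X π ω * X)ᵀ *ᵥ (samplingSdeb X π ω *ᵥ y) =
      ∑ s, (1 / (m * π (ω s)) / (1 - 1 / (m * π (ω s)) * lev X (ω s)) * y (ω s)) • X (ω s) := by
  funext k
  rw [Finset.sum_apply, mulVec, dotProduct]
  refine Finset.sum_congr rfl fun s _ => ?_
  have hy : (samplingSdeb X π ω *ᵥ y) s = 1 / Real.sqrt (1 - lev X (ω s) / (m * π (ω s))) *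
      (1 / Real.sqrt (m * π (ω s))) * y (ω s) := by
    have := sketch_entry X π ω (replicateCol (Fin 1) y) s 0
    rwa [← replicateCol_mulVec] at this
  rw [hy, transpose_apply, sketch_entry, Pi.smul_apply, smul_eq_mul,
    ← sketch_weight hm (hπ (ω s)) (hl (ω s))]
  ring

lemma row_mul (X : Matrix (Fin n) (Fin p) ℝ) (T : Matrix (Fin p) (Fin p) ℝ) (i : Fin n) :
    (X * T) i = Tᵀ *ᵥ X i := by
  funext k
  simp only [Matrix.mul_apply, mulVec, dotProduct, transpose_apply, mul_comm]

lemma gramOn_mul (c : Fin n → ℝ) (X : Matrix (Fin n) (Fin p) ℝ) (T : Matrix (Fin p) (Fin p) ℝ)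
    (S : Finset (Fin m)) (ω : Fin m → Fin n) :
    gramOn c (X * T) S ω = Tᵀ * gramOn c X S ω * T := by
  rw [gramOn, gramOn, Matrix.mul_sum, Matrix.sum_mul]
  refine Finset.sum_congr rfl fun s _ => ?_
  rw [Matrix.mul_smul, Matrix.smul_mul, mul_vecMulVec, vecMulVec_mul, row_mul,
    ← mulVec_transpose]

lemma resid_orth {X : Matrix (Fin n) (Fin p) ℝ} (hX : IsUnit (Xᵀ * X).det) (y : Fin n → ℝ) :
    Xᵀ *ᵥ olsResid X y = 0 := by
  rw [olsResid, olsSol, mulVec_sub, mulVec_mulVec, mulVec_mulVec, mul_nonsing_inv _ hX,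
    one_mulVec, sub_self]

/-- In orthonormal coordinates the debiased estimator is the exact solution plus a weighted
regression of the residual. -/
lemma betaCheck_eq {X : Matrix (Fin n) (Fin p) ℝ} {π : Fin n → ℝ} (hm : 0 < m)
    (hπ : ∀ i, 0 < π i) (hl : ∀ i, lev X i < m * π i) {T : Matrix (Fin p) (Fin p) ℝ}
    (hT : IsUnit T.det) {a : Fin n → ℝ}
    (ha : a = fun i => 1 / (m * π i) / (1 - 1 / (m * π i) * lev X i)) (ω : Fin m → Fin n)
    (hdet : IsUnit (gramOn a X Finset.univ ω).det) (y : Fin n → ℝ) :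
    betaCheck X y π ω = olsSol X y + T *ᵥ ((gramOn a (X * T) Finset.univ ω)⁻¹ *ᵥ
      ∑ s, (a (ω s) * olsResid X y (ω s)) • (X * T) (ω s)) := by
  have hTt : IsUnit Tᵀ.det := by rwa [det_transpose]
  have hb : ∑ s, (a (ω s) * olsResid X y (ω s)) • (X * T) (ω s) =
      Tᵀ *ᵥ ∑ s, (a (ω s) * olsResid X y (ω s)) • X (ω s) := by
    rw [mulVec_sum]
    exact Finset.sum_congr rfl fun s _ => by rw [mulVec_smul, row_mul]
  have hinv : T * (gramOn a (X * T) Finset.univ ω)⁻¹ * Tᵀ = (gramOn a X Finset.univ ω)⁻¹ := by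
    rw [gramOn_mul, Matrix.mul_inv_rev, Matrix.mul_inv_rev]
    calc _ = (T * T⁻¹) * (gramOn a X Finset.univ ω)⁻¹ * (Tᵀ⁻¹ * Tᵀ) := by
          simp only [Matrix.mul_assoc]
      _ = _ := by
          rw [mul_nonsing_inv _ hT, nonsing_inv_mul _ hTt, Matrix.one_mul, Matrix.mul_one]
  rw [hb, mulVec_mulVec, mulVec_mulVec, hinv]
  have hy : ∑ s, (a (ω s) * y (ω s)) • X (ω s) = gramOn a X Finset.univ ω *ᵥ olsSol X y +
      ∑ s, (a (ω s) * olsResid X y (ω s)) • X (ω s) := by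
    rw [gramOn_mulVec, ← Finset.sum_add_distrib]
    refine Finset.sum_congr rfl fun s _ => ?_
    rw [← add_smul]
    congr 1
    have : olsResid X y (ω s) = y (ω s) - X (ω s) ⬝ᵥ olsSol X y := rfl
    rw [this]
    ring
  have hr := sketch_rhs hm hπ hl ω y
  have hg := sketch_gram hm hπ hl ω
  rw [← ha] at hg
  have hr2 : (samplingSdeb X π ω * X)ᵀ *ᵥ (samplingSdeb X π ω *ᵥ y) =
    ∑ s, (a (ω s) * y (ω s)) • X (ω s) := by rw [hr, ha]
  rw [betaCheck, hg, hr2, hy, mulVec_add, mulVec_mulVec, nonsing_inv_mul _ hdet, one_mulVec]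

/-- The excess loss is the squared length of the displacement in orthonormal coordinates. -/
lemma loss_excess {X : Matrix (Fin n) (Fin p) ℝ} (hX : IsUnit (Xᵀ * X).det)
    {T : Matrix (Fin p) (Fin p) ℝ} (hU : (X * T)ᵀ * (X * T) = 1) (y : Fin n → ℝ)
    (c : Fin p → ℝ) :
    lossL X y (olsSol X y + T *ᵥ c) - lossL X y (olsSol X y) = c ⬝ᵥ c := by
  have e : y - X *ᵥ (olsSol X y + T *ᵥ c) = olsResid X y - (X * T) *ᵥ c := by
    rw [mulVec_add, mulVec_mulVec, olsResid, sub_sub]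
  have h1 : olsResid X y ⬝ᵥ ((X * T) *ᵥ c) = 0 := by
    rw [dotProduct_mulVec, ← mulVec_transpose, transpose_mul, ← mulVec_mulVec, resid_orth hX,
      mulVec_zero, zero_dotProduct]
  have h2 : ((X * T) *ᵥ c) ⬝ᵥ ((X * T) *ᵥ c) = c ⬝ᵥ c := by
    rw [dotProduct_mulVec, ← mulVec_transpose, mulVec_mulVec, hU, one_mulVec]
  have h3 : ((X * T) *ᵥ c) ⬝ᵥ olsResid X y = 0 := by rw [dotProduct_comm, h1]
  rw [lossL, lossL, e]
  change _ - olsResid X y ⬝ᵥ olsResid X y = _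
  rw [sub_dotProduct, dotProduct_sub, dotProduct_sub, h1, h2, h3]
  ring

lemma condExp_affine {V W : Type*} {Ω : Type*} [AddCommGroup V] [Module ℝ V] [AddCommGroup W]
    [Module ℝ W] {P : Ω → ℝ} {ζ : Finset Ω} (hP : eventProb P ζ ≠ 0) (b : W) (f : V →ₗ[ℝ] W)
    {g : Ω → W} {h : Ω → V} (hg : ∀ ω ∈ ζ, g ω = b + f (h ω)) :
    condExp P ζ g = b + f (condExp P ζ h) := by
  rw [condExp, condExp, map_smul, map_sum,
    Finset.sum_congr rfl fun ω hω => by rw [hg ω hω, smul_add], Finset.sum_add_distrib,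
    ← Finset.sum_smul, smul_add, smul_smul]
  change ((eventProb P ζ)⁻¹ * eventProb P ζ) • b + _ = _
  rw [inv_mul_cancel₀ hP, one_smul]
  simp only [map_smul]

end Reduction

/-! ### Numerical estimates and the bias bound -/

section Numerics

lemma one_lt_log_of_three_le {x : ℝ} (hx : 3 ≤ x) : 1 < Real.log x := by
  rw [Real.lt_log_iff_exp_lt (by linarith)]
  have := Real.exp_one_lt_d9
  linarith

lemma one_le_log_div_loglog {x : ℝ} (hx : 3 ≤ x) :
    1 ≤ Real.log x / Real.log (Real.log x) := by
  have h := one_lt_log_of_three_le hx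
  rw [one_le_div (Real.log_pos h)]
  have := Real.log_le_sub_one_of_pos (by linarith : 0 < Real.log x)
  linarith

lemma log_ratio_ge {n p : ℕ} (hp : 1 ≤ p) (hn : 3 ≤ n) {α δ : ℝ} (hα : 0 < α) (hδ0 : 0 < δ)
    (hδ : δ ≤ (n : ℝ) ^ (-(3 + α))) : 3 ≤ Real.log (p / δ) ∧ δ ≤ 1 / 27 := by
  have hn' : (3:ℝ) ≤ n := by exact_mod_cast hn
  have hp' : (1:ℝ) ≤ p := by exact_mod_cast hp
  have h1 : (n : ℝ) ^ (-(3 + α)) ≤ (n : ℝ) ^ (-3 : ℝ) :=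
    Real.rpow_le_rpow_of_exponent_le (by linarith) (by linarith)
  have h2 : (n : ℝ) ^ (-3 : ℝ) ≤ 1 / 27 := by
    rw [Real.rpow_neg (by linarith), ← one_div]
    refine one_div_le_one_div_of_le (by norm_num) ?_
    have : (n:ℝ) ^ (3:ℝ) = (n:ℝ) ^ (3:ℕ) := by exact_mod_cast Real.rpow_natCast (n:ℝ) 3
    rw [this]
    calc (27:ℝ) = 3 ^ 3 := by norm_num
      _ ≤ _ := pow_le_pow_left₀ (by norm_num) hn' 3
  have h3 : δ ≤ 1 / 27 := hδ.trans (h1.trans h2)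
  refine ⟨?_, h3⟩
  have h4 : (27:ℝ) ≤ p / δ := by
    rw [le_div_iff₀ hδ0]; linarith
  have h5 : Real.log 27 = 3 * Real.log 3 := by
    rw [show (27:ℝ) = 3 ^ 3 by norm_num, Real.log_pow]; norm_num
  have h6 := one_lt_log_of_three_le (le_refl (3:ℝ))
  have h7 := Real.log_le_log (by norm_num) h4
  linarith

/-- The tail probability is at most `δ`, and also `O(κ^{3/2})`: half of the exponent pays for
`δ`, the other half beats any power of `κ`. -/
lemma tail_bounds {p : ℕ} (hp : 1 ≤ p) {δ κ : ℝ} (hδ0 : 0 < δ) (hδ : δ ≤ 1 / 27) (hκ0 : 0 < κ)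
    (hκ1 : κ ≤ 1 / 100) (h : 160 * κ * Real.log (p / δ) ≤ 1) :
    p * Real.exp (-(1 / (80 * κ))) ≤ δ ∧
      p * Real.exp (-(1 / (80 * κ))) ≤ 2000 * (κ * Real.sqrt κ) := by
  have hp' : (0:ℝ) < p := by exact_mod_cast hp
  have e : -(1 / (80 * κ)) = -(1 / (160 * κ)) + -(1 / (160 * κ)) := by field_simp; norm_num
  have h1 : p * Real.exp (-(1 / (160 * κ))) ≤ δ := by
    have h2 : Real.log (p / δ) ≤ 1 / (160 * κ) := by
      rw [le_div_iff₀ (by positivity)]; linarith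
    calc p * Real.exp (-(1 / (160 * κ))) ≤ p * Real.exp (-Real.log (p / δ)) := by gcongr
      _ = δ := by
          rw [Real.exp_neg, Real.exp_log (by positivity)]
          field_simp
  have hx0 : 0 < 1 / (160 * κ) := by positivity
  have h3 : Real.exp (-(1 / (160 * κ))) ≤ 51200 * κ ^ 2 := by
    have h4 := Real.quadratic_le_exp_of_nonneg hx0.le
    have h5 : (1 / (160 * κ)) ^ 2 / 2 ≤ Real.exp (1 / (160 * κ)) := by linarith
    rw [Real.exp_neg]
    refine (inv_anti₀ (by positivity) h5).trans (le_of_eq ?_)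
    field_simp
    norm_num
  have h6 : Real.exp (-(1 / (160 * κ))) ≤ 1 := Real.exp_le_one_iff.mpr (by linarith)
  have hs0 : 0 ≤ Real.sqrt κ := Real.sqrt_nonneg κ
  have hs : Real.sqrt κ * Real.sqrt κ = κ := Real.mul_self_sqrt hκ0.le
  have hs1 : Real.sqrt κ ≤ 1 := Real.sqrt_le_one.mpr (by linarith)
  have h7 : κ ^ 2 ≤ κ * Real.sqrt κ := by
    rw [sq]
    refine mul_le_mul_of_nonneg_left ?_ hκ0.le
    nlinarith
  have h8 : p * Real.exp (-(1 / (80 * κ))) =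
      p * Real.exp (-(1 / (160 * κ))) * Real.exp (-(1 / (160 * κ))) := by
    rw [e, Real.exp_add, mul_assoc]
  have hE := (Real.exp_pos (-(1 / (160 * κ)))).le
  rw [h8]
  constructor
  · calc _ ≤ δ * 1 := mul_le_mul h1 h6 hE hδ0.le
      _ = δ := mul_one δ
  · calc _ ≤ δ * (51200 * κ ^ 2) := mul_le_mul h1 h3 hE hδ0.le
      _ ≤ 1 / 27 * (51200 * κ ^ 2) := mul_le_mul_of_nonneg_right hδ (by positivity)
      _ ≤ _ := by nlinarith [sq_nonneg κ]

end Numerics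

/-- **Bias of debiased subsampled OLS** (Theorem 4.4, bias part): there are
absolute constants `C, C' > 0` such that, under the row-norm condition with
exponent `α`, for `0 < δ ≤ n^{−(3+α)}` and `m ≥ C θ_max(X) p log(p/δ)`, there
is an event `ζ` of probability at least `1 − δ` on which the debiased sketched
Gram matrices are invertible and `Bias_ζ(β̌) ≤ ε² ‖r‖²` with
`ε = C' (log n/log log n) √(θ_max(X)³ p³/m³)`. -/
theorem debiased_subsampled_ols_bias :
    ∃ C C' : ℝ, 0 < C ∧ 0 < C' ∧
      ∀ (n p m : ℕ) (X : Matrix (Fin n) (Fin p) ℝ) (y : Fin n → ℝ)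
        (π : Fin n → ℝ) (α : ℝ),
        1 ≤ p → p ≤ n → 3 ≤ n →
        IsUnit (Xᵀ * X).det →
        0 < α →
        (∀ i, X i ≠ 0 → (n : ℝ) ^ (-α) ≤ (X i ⬝ᵥ X i) / frobNorm X ^ 2) →
        (∀ i, 0 < π i) → (∑ i, π i = 1) →
        (∀ i, lev X i < m * π i) →
        ∀ δ : ℝ, 0 < δ → δ ≤ (n : ℝ) ^ (-(3 + α)) →
        C * thetaMax X π * p * Real.log (p / δ) ≤ m →
        ∃ ζ : Finset (Fin m → Fin n),
          1 - δ ≤ eventProb (samplingP π) ζ ∧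
          (∀ ω ∈ ζ,
            IsUnit ((samplingSdeb X π ω * X)ᵀ * (samplingSdeb X π ω * X)).det) ∧
          lossL X y (condExp (samplingP π) ζ (betaCheck X y π)) -
              lossL X y (olsSol X y)
            ≤ (C' * (Real.log n / Real.log (Real.log n)) *
                  Real.sqrt (thetaMax X π ^ 3 * p ^ 3 / m ^ 3)) ^ 2 *
              (olsResid X y ⬝ᵥ olsResid X y) := by
  refine ⟨160, 16184, by norm_num, by norm_num, ?_⟩
  intro n p m X y π α hp hpn hn hX hα _ hπ h1 hl δ hδ0 hδ hmC
  obtain ⟨hL, hδ27⟩ := log_ratio_ge hp hn hα hδ0 hδ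
  obtain ⟨T, hT, hU, hlev⟩ := exists_orthonormalizer X hX
  have hp' : (1:ℝ) ≤ p := by exact_mod_cast hp
  have hp0 : (0:ℝ) < p := by linarith
  have hlev0 : ∀ i, 0 ≤ lev X i := fun i => by rw [hlev]; exact dot_self_nonneg _
  -- strict inequality in `lev X i < m * π i` excludes `m = 0`
  have hm : 0 < m := by
    rcases Nat.eq_zero_or_pos m with h0 | h0
    · have h2 := hl ⟨0, by omega⟩
      rw [h0, Nat.cast_zero, zero_mul] at h2
      exact absurd (hlev0 _) (not_le.mpr h2)
    · exact h0
  have hm' : (0:ℝ) < m := by exact_mod_cast hm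
  have hθle : ∀ i, lev X i ≤ thetaMax X π * p * π i := by
    intro i
    have h2 : lev X i / (p * π i) ≤ thetaMax X π :=
      le_ciSup (f := fun i => lev X i / (p * π i)) (Set.finite_range _).bddAbove i
    have h3 : 0 < p * π i := mul_pos hp0 (hπ i)
    rw [div_le_iff₀ h3] at h2
    linarith
  have hθ1 : 1 ≤ thetaMax X π := by
    have h2 : ∑ i, lev X i = p := by
      have h3 := sum_row_form hU 1
      simp only [one_mulVec, trace_one, Fintype.card_fin] at h3
      rw [← h3]
      exact Finset.sum_congr rfl fun i _ => hlev i
    have h4 : (p:ℝ) ≤ thetaMax X π * p := by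
      calc (p:ℝ) = ∑ i, lev X i := h2.symm
        _ ≤ ∑ i, thetaMax X π * p * π i := Finset.sum_le_sum fun i _ => hθle i
        _ = _ := by rw [← Finset.mul_sum, h1, mul_one]
    nlinarith
  obtain ⟨κ, hκdef⟩ : ∃ κ, κ = thetaMax X π * p / m := ⟨_, rfl⟩
  have hκ0 : 0 < κ := by rw [hκdef]; positivity
  have hκm : 1 / m ≤ κ := by
    rw [hκdef]
    refine div_le_div_of_nonneg_right ?_ hm'.le
    nlinarith
  have hκL : 160 * κ * Real.log (p / δ) ≤ 1 := by
    have : 160 * κ * Real.log (p / δ) =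
        160 * thetaMax X π * p * Real.log (p / δ) / m := by rw [hκdef]; ring
    rw [this, div_le_one hm']
    exact hmC
  have hκ1 : κ ≤ 1 / 100 := by nlinarith
  have hκ : ∀ i, 1 / (m * π i) * ((X * T) i ⬝ᵥ (X * T) i) ≤ κ := by
    intro i
    have h0 := hπ i
    rw [← hlev, hκdef, one_div, inv_mul_le_iff₀ (by positivity)]
    calc lev X i ≤ thetaMax X π * p * π i := hθle i
      _ = _ := by field_simp
  obtain ⟨a, hadef⟩ : ∃ a : Fin n → ℝ,
    a = fun i => 1 / (m * π i) / (1 - 1 / (m * π i) * lev X i) := ⟨_, rfl⟩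
  have hden : ∀ i, 0 < 1 - 1 / (m * π i) * lev X i := fun i => by
    have := hκ i
    rw [← hlev] at this
    linarith
  have ha : ∀ i, a i * (1 - 1 / (m * π i) * ((X * T) i ⬝ᵥ (X * T) i)) = 1 / (m * π i) := by
    intro i
    rw [← hlev, hadef]
    exact div_mul_cancel₀ _ (hden i).ne'
  have hwa : ∀ i, 1 / (m * π i) ≤ a i := by
    intro i
    have h0 := hπ i
    have hw : 0 < 1 / (m * π i) := by positivity
    rw [hadef]
    refine le_div_self hw.le (hden i) ?_
    have := mul_nonneg hw.le (hlev0 i)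
    linarith
  obtain ⟨hτ1, hτ2⟩ := tail_bounds hp hδ0 hδ27 hκ0 hκ1 hκL
  have hprob := goodEvent_prob hU hπ h1 hm hκ0 hκ1 hκm hκ hwa le_rfl
  have hP : 1 / 2 ≤ eventProb (samplingP π) (goodEvent a (X * T) m) := by linarith
  have hdet : ∀ ω ∈ goodEvent a (X * T) m, IsUnit (gramOn a X Finset.univ ω).det := by
    intro ω hω
    have h2 := isUnit_det_of_quarter (goodEvent_quarter hω)
    rw [gramOn_mul, det_mul, det_mul] at h2
    exact isUnit_of_mul_isUnit_right (isUnit_of_mul_isUnit_left h2)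
  refine ⟨goodEvent a (X * T) m, by linarith, fun ω hω => ?_, ?_⟩
  · rw [sketch_gram hm hπ hl, ← hadef]
    exact hdet ω hω
  have hr : ∑ i, olsResid X y i • (X * T) i = 0 := by
    have h2 : ∑ i, olsResid X y i • (X * T) i = (X * T)ᵀ *ᵥ olsResid X y := by
      rw [mulVec_transpose, vecMul_eq_sum]
    rw [h2, transpose_mul, ← mulVec_mulVec, resid_orth hX, mulVec_zero]
  have hbias := goodEvent_bias hU hπ h1 hm hκ0 hκ1 hκm hκ ha hr le_rfl rfl
  have hcond := condExp_affine (P := samplingP π) (ζ := goodEvent a (X * T) m) (by linarith)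
    (olsSol X y) T.mulVecLin
    (fun ω hω => betaCheck_eq hm hπ hl hT hadef ω (hdet ω hω) y)
  rw [hcond, mulVecLin_apply, loss_excess hX hU, condExp, smul_dotProduct, dotProduct_smul,
    smul_eq_mul, smul_eq_mul]
  set E : Fin p → ℝ := ∑ ω ∈ goodEvent a (X * T) m, samplingP π ω •
      ((gramOn a (X * T) Finset.univ ω)⁻¹ *ᵥ
        ∑ s, (a (ω s) * olsResid X y (ω s)) • (X * T) (ω s))
  set P := eventProb (samplingP π) (goodEvent a (X * T) m)
  have hr0 := dot_self_nonneg (olsResid X y)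
  have hE0 := dot_self_nonneg E
  have hPinv : P⁻¹ ≤ 2 := by
    rw [inv_le_comm₀ (by linarith) (by norm_num)]
    linarith
  have hPinv0 : 0 ≤ P⁻¹ := inv_nonneg.mpr (by linarith)
  have hs0 : 0 ≤ Real.sqrt κ := Real.sqrt_nonneg κ
  have hκs : 0 ≤ κ * Real.sqrt κ := by positivity
  have hsqrt : Real.sqrt (thetaMax X π ^ 3 * p ^ 3 / m ^ 3) = κ * Real.sqrt κ := by
    have h2 : thetaMax X π ^ 3 * p ^ 3 / m ^ 3 = (κ * Real.sqrt κ) ^ 2 := by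
      rw [mul_pow, Real.sq_sqrt hκ0.le, hκdef]
      ring
    rw [h2, Real.sqrt_sq hκs]
  have hlog := one_le_log_div_loglog (x := n) (by exact_mod_cast hn)
  rw [hsqrt]
  calc P⁻¹ * (P⁻¹ * (E ⬝ᵥ E)) = P⁻¹ ^ 2 * (E ⬝ᵥ E) := by ring
    _ ≤ 2 ^ 2 * ((8092 * (κ * Real.sqrt κ)) ^ 2 * (olsResid X y ⬝ᵥ olsResid X y)) := by
        refine mul_le_mul (pow_le_pow_left₀ hPinv0 hPinv 2) (hbias.trans ?_) hE0 (by norm_num)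
        refine mul_le_mul_of_nonneg_right (pow_le_pow_left₀ ?_ ?_ 2) hr0
        · positivity
        · linarith
    _ = (16184 * 1 * (κ * Real.sqrt κ)) ^ 2 * (olsResid X y ⬝ᵥ olsResid X y) := by ring
    _ ≤ _ := by gcongr

end
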